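/- Let n ≥ 1, let D ⊆ ℝ^{2n} be open, let J be a C^∞ almost complex structure on D, and let u : D → ℝ be C². Then the following are equivalent: (i) for every open set Ω ⊆ ℂ and every C² J-holomorphic map f : Ω → D, the function u ∘ f satisfies Δ(u∘f) ≥ 0 on Ω (where Δ is the Euclidean Laplacian on ℝ² ≅ ℂ), i.e. u ∘ f is subharmonic; (ii) ℒ(u)_z(v) ≥ 0 for every z ∈ D and every v ∈ ℝ^{2n}. (A C² function is J-plurisubharmonic if and only if its Levi form is everywhere positive semidefinite.) -/

import Mathlib

open Filter Topology

/-- The 2-form `ddᶜu` associated with an almost complex structure `J`. -/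
noncomputable def acDDc {E : Type*} [NormedAddCommGroup E] [NormedSpace ℝ E]
    (J : E → (E →L[ℝ] E)) (u : E → ℝ) (z v w : E) : ℝ :=
  - fderiv ℝ (fun z' => fderiv ℝ u z' (J z' w)) z v
    + fderiv ℝ (fun z' => fderiv ℝ u z' (J z' v)) z w

/-- The Levi form `ℒ(u)_z(v) := ddᶜu_z(v, J(z)v)`. -/
noncomputable def acLevi {E : Type*} [NormedAddCommGroup E] [NormedSpace ℝ E]
    (J : E → (E →L[ℝ] E)) (u : E → ℝ) (z v : E) : ℝ :=
  acDDc J u z v (J z v)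

/-- `f : Ω → E` is `J`-holomorphic on `Ω` if `df_ζ(iξ) = J(f(ζ))(df_ζ(ξ))`. -/
def IsJHolo {E : Type*} [NormedAddCommGroup E] [NormedSpace ℝ E]
    (J : E → (E →L[ℝ] E)) (Ω : Set ℂ) (f : ℂ → E) : Prop :=
  ∀ ζ ∈ Ω, ∀ ξ : ℂ, fderiv ℝ f ζ (Complex.I * ξ) = J (f ζ) (fderiv ℝ f ζ ξ)

/-- Euclidean Laplacian of a function on ℂ ≅ ℝ². -/
noncomputable def lap (g : ℂ → ℝ) (ζ : ℂ) : ℝ :=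
  fderiv ℝ (fun w => fderiv ℝ g w 1) ζ 1
    + fderiv ℝ (fun w => fderiv ℝ g w Complex.I) ζ Complex.I


section PartA

variable {E : Type*} [NormedAddCommGroup E] [NormedSpace ℝ E]

theorem pa_lam_contDiffOn {D : Set E} (hD : IsOpen D) {J : E → (E →L[ℝ] E)}
    (hJ : ContDiffOn ℝ 1 J D) {u : E → ℝ} (hu : ContDiffOn ℝ 2 u D) :
    ContDiffOn ℝ 1 (fun z => (fderiv ℝ u z).comp (J z)) D :=
  (hu.fderiv_of_isOpen hD (by norm_num)).clm_comp hJ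

theorem pa_levi_eq {D : Set E} (hD : IsOpen D) {J : E → (E →L[ℝ] E)}
    (hJ : ContDiffOn ℝ 1 J D) {u : E → ℝ} (hu : ContDiffOn ℝ 2 u D) {z : E} (hz : z ∈ D) (v : E) :
    acLevi J u z v =
      - fderiv ℝ (fun z => (fderiv ℝ u z).comp (J z)) z v (J z v)
      + fderiv ℝ (fun z => (fderiv ℝ u z).comp (J z)) z (J z v) v := by
  have hd : DifferentiableAt ℝ (fun z => (fderiv ℝ u z).comp (J z)) z :=
    ((pa_lam_contDiffOn hD hJ hu).differentiableOn (by norm_num)).differentiableAt (hD.mem_nhds hz)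
  have key : ∀ w : E, fderiv ℝ (fun z' => fderiv ℝ u z' (J z' w)) z
      = (fderiv ℝ (fun z => (fderiv ℝ u z).comp (J z)) z).flip w := by
    intro w
    have := (hd.hasFDerivAt.clm_apply (hasFDerivAt_const w z)).fderiv
    simpa using this
  simp only [acLevi, acDDc, key]
  simp

theorem pa_lap_eq_levi {D : Set E} (hD : IsOpen D) {J : E → (E →L[ℝ] E)}
    (hJ : ContDiffOn ℝ 1 J D) {u : E → ℝ} (hu : ContDiffOn ℝ 2 u D)
    {Ω : Set ℂ} (hΩ : IsOpen Ω) {f : ℂ → E} (hf : ContDiffOn ℝ 2 f Ω)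
    (hm : Set.MapsTo f Ω D) (hh : IsJHolo J Ω f) {ζ : ℂ} (hζ : ζ ∈ Ω) :
    lap (u ∘ f) ζ = acLevi J u (f ζ) (fderiv ℝ f ζ 1) := by
  rw [pa_levi_eq hD hJ hu (hm hζ)]
  set lam : E → (E →L[ℝ] ℝ) := fun z => (fderiv ℝ u z).comp (J z) with hlam
  have hd : DifferentiableAt ℝ lam (f ζ) :=
    ((pa_lam_contDiffOn hD hJ hu).differentiableOn (by norm_num)).differentiableAt
      (hD.mem_nhds (hm hζ))
  have hfd : ∀ w ∈ Ω, DifferentiableAt ℝ f w := fun w hw =>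
    (hf.differentiableOn (by norm_num)).differentiableAt (hΩ.mem_nhds hw)
  have hf2 : DifferentiableAt ℝ (fderiv ℝ f) ζ :=
    ((hf.fderiv_of_isOpen hΩ (m := 1) (by norm_num)).differentiableOn (by norm_num)).differentiableAt
      (hΩ.mem_nhds hζ)
  have hud : ∀ w ∈ Ω, DifferentiableAt ℝ u (f w) := fun w hw =>
    (hu.differentiableOn (by norm_num)).differentiableAt (hD.mem_nhds (hm hw))
  have e1 : (fun w => fderiv ℝ (u ∘ f) w 1) =ᶠ[𝓝 ζ]
      (fun w => - (lam (f w) (fderiv ℝ f w Complex.I))) := by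
    filter_upwards [hΩ.mem_nhds hζ] with w hw
    rw [fderiv_comp w (hud w hw) (hfd w hw)]
    have := hh w hw Complex.I
    rw [Complex.I_mul_I, map_neg] at this
    simp only [hlam, ContinuousLinearMap.comp_apply, ← this, map_neg, neg_neg]
  have e2 : (fun w => fderiv ℝ (u ∘ f) w Complex.I) =ᶠ[𝓝 ζ]
      (fun w => (lam (f w) (fderiv ℝ f w 1))) := by
    filter_upwards [hΩ.mem_nhds hζ] with w hw
    rw [fderiv_comp w (hud w hw) (hfd w hw)]
    have := hh w hw 1
    rw [mul_one] at this
    simp only [hlam, ContinuousLinearMap.comp_apply, ← this]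
  have hcomp : HasFDerivAt (fun w => lam (f w)) ((fderiv ℝ lam (f ζ)).comp (fderiv ℝ f ζ)) ζ :=
    hd.hasFDerivAt.comp ζ (hfd ζ hζ).hasFDerivAt
  have key : ∀ a : ℂ, HasFDerivAt (fun w => lam (f w) (fderiv ℝ f w a)) _ ζ := fun a =>
    hcomp.clm_apply (hf2.hasFDerivAt.clm_apply (hasFDerivAt_const a ζ))
  have hI := hh ζ hζ 1
  rw [mul_one] at hI
  have hsymm : fderiv ℝ (fderiv ℝ f) ζ 1 Complex.I = fderiv ℝ (fderiv ℝ f) ζ Complex.I 1 := by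
    have : IsSymmSndFDerivAt ℝ f ζ :=
      (hf.contDiffAt (hΩ.mem_nhds hζ)).isSymmSndFDerivAt (by simp)
    exact this.eq 1 Complex.I
  rw [lap, e1.fderiv_eq, e2.fderiv_eq, (key 1).fderiv, (key Complex.I).fun_neg.fderiv]
  simp [← hI, hsymm]

theorem pa_levi_smul {D : Set E} (hD : IsOpen D) {J : E → (E →L[ℝ] E)}
    (hJ : ContDiffOn ℝ 1 J D) {u : E → ℝ} (hu : ContDiffOn ℝ 2 u D) {z : E} (hz : z ∈ D) (v : E)
    (t : ℝ) : acLevi J u z (t • v) = t ^ 2 * acLevi J u z v := by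
  rw [pa_levi_eq hD hJ hu hz, pa_levi_eq hD hJ hu hz]
  simp
  ring

theorem pa_tendsto_apply {G : Type*} [NormedAddCommGroup G] [NormedSpace ℝ G] {L : ℕ → E →L[ℝ] G}
    {L0 : E →L[ℝ] G} {x : ℕ → E} {x0 : E} (hL : Tendsto L atTop (𝓝 L0))
    (hx : Tendsto x atTop (𝓝 x0)) : Tendsto (fun k => L k (x k)) atTop (𝓝 (L0 x0)) :=
  (isBoundedBilinearMap_apply.continuous.tendsto (L0, x0)).comp (hL.prodMk_nhds hx)

theorem pa_levi_tendsto {D : Set E} (hD : IsOpen D) {J : E → (E →L[ℝ] E)}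
    (hJ : ContDiffOn ℝ 1 J D) {u : E → ℝ} (hu : ContDiffOn ℝ 2 u D) {z : E} (hz : z ∈ D) (v : E)
    {zs vs : ℕ → E} (h1 : Tendsto zs atTop (𝓝 z)) (h2 : Tendsto vs atTop (𝓝 v)) :
    Tendsto (fun k => acLevi J u (zs k) (vs k)) atTop (𝓝 (acLevi J u z v)) := by
  have hc : ContinuousAt (fderiv ℝ (fun z => (fderiv ℝ u z).comp (J z))) z :=
    ((pa_lam_contDiffOn hD hJ hu).continuousOn_fderiv_of_isOpen hD le_rfl).continuousAt
      (hD.mem_nhds hz)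
  have hJc : ContinuousAt J z := hJ.continuousOn.continuousAt (hD.mem_nhds hz)
  have hL := hc.tendsto.comp h1
  have hJv := pa_tendsto_apply (hJc.tendsto.comp h1) h2
  have := (pa_tendsto_apply (pa_tendsto_apply hL h2) hJv).neg.add
    (pa_tendsto_apply (pa_tendsto_apply hL hJv) h2)
  rw [pa_levi_eq hD hJ hu hz]
  refine this.congr' ?_
  filter_upwards [h1.eventually (hD.mem_nhds hz)] with k hk
  rw [pa_levi_eq hD hJ hu hk]
  rfl

/-- Continuous partial derivatives give a Fréchet derivative. -/
theorem pa_partials {F F0 F1 : ℂ → E} (h0 : Continuous F0) (h1 : Continuous F1)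
    (d0 : ∀ ζ, HasDerivAt (fun s : ℝ => F (ζ + s)) (F0 ζ) 0)
    (d1 : ∀ ζ, HasDerivAt (fun s : ℝ => F (ζ + s * Complex.I)) (F1 ζ) 0) (ζ : ℂ) :
    HasFDerivAt F (Complex.reCLM.smulRight (F0 ζ) + Complex.imCLM.smulRight (F1 ζ)) ζ := by
  let f : ℝ → ℝ → E := fun x y => F (x + y * Complex.I)
  let f₁ : ℝ → ℝ → ℝ →L[ℝ] E := fun x y =>
    ContinuousLinearMap.toSpanSingleton ℝ (F0 (x + y * Complex.I))
  let f₂ : ℝ → ℝ → ℝ →L[ℝ] E := fun x y =>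
    ContinuousLinearMap.toSpanSingleton ℝ (F1 (x + y * Complex.I))
  have hf₁ : ∀ v : ℝ × ℝ, HasFDerivAt (f · v.2) (f₁ v.1 v.2) v.1 := by
    intro v
    have h := d0 (v.1 + v.2 * Complex.I)
    have h' : HasDerivAt (fun s : ℝ => F ((v.1 + v.2 * Complex.I) + ((s - v.1 : ℝ) : ℂ)))
        (F0 (v.1 + v.2 * Complex.I)) v.1 := by
      exact HasDerivAt.comp_sub_const (f := fun s : ℝ => F ((v.1 + v.2 * Complex.I) + (s : ℂ)))
        v.1 v.1 (by simpa using h)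
    have e : (fun s : ℝ => F ((v.1 + v.2 * Complex.I) + ((s - v.1 : ℝ) : ℂ))) = (f · v.2) := by
      funext s
      simp only [f]
      congr 1
      push_cast
      ring
    rw [e] at h'
    exact h'.hasFDerivAt
  have hf₂ : ∀ v : ℝ × ℝ, HasFDerivAt (f v.1 ·) (f₂ v.1 v.2) v.2 := by
    intro v
    have h := d1 (v.1 + v.2 * Complex.I)
    have h' : HasDerivAt (fun s : ℝ => F ((v.1 + v.2 * Complex.I) + ((s - v.2 : ℝ) : ℂ) * Complex.I))
        (F1 (v.1 + v.2 * Complex.I)) v.2 := by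
      exact HasDerivAt.comp_sub_const
        (f := fun s : ℝ => F ((v.1 + v.2 * Complex.I) + (s : ℂ) * Complex.I))
        v.2 v.2 (by simpa using h)
    have e : (fun s : ℝ => F ((v.1 + v.2 * Complex.I) + ((s - v.2 : ℝ) : ℂ) * Complex.I))
        = (f v.1 ·) := by
      funext s
      simp only [f]
      congr 1
      push_cast
      ring
    rw [e] at h'
    exact h'.hasFDerivAt
  have c1 : Continuous (Function.uncurry f₁) := by
    have : Continuous fun v : ℝ × ℝ => F0 (v.1 + v.2 * Complex.I) := by fun_prop
    exact (ContinuousLinearMap.toSpanSingletonCLE (𝕜 := ℝ) (E := E)).continuous.comp this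
  have c2 : Continuous (Function.uncurry f₂) := by
    have : Continuous fun v : ℝ × ℝ => F1 (v.1 + v.2 * Complex.I) := by fun_prop
    exact (ContinuousLinearMap.toSpanSingletonCLE (𝕜 := ℝ) (E := E)).continuous.comp this
  have key := hasStrictFDerivAt_uncurry_coprod (𝕜 := ℝ) (u := (ζ.re, ζ.im)) (f := f) (f₁ := f₁)
    (f₂ := f₂) (Eventually.of_forall hf₁) (Eventually.of_forall hf₂) c1.continuousAt
    c2.continuousAt
  have k2 : HasFDerivAt (Function.uncurry f) _ (Complex.equivRealProdCLM ζ) := key.hasFDerivAt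
  have k3 := k2.comp ζ (Complex.equivRealProdCLM.hasFDerivAt (x := ζ))
  have e : Function.uncurry f ∘ Complex.equivRealProdCLM = F := by
    funext w
    simp [f, Function.uncurry]
  rw [e] at k3
  refine k3.congr_fderiv ?_
  ext w
  simp [f₁, f₂, Function.HasUncurry.uncurry]

theorem pa_contDiff_one {F F0 F1 : ℂ → E} (h0 : Continuous F0) (h1 : Continuous F1)
    (d0 : ∀ ζ, HasDerivAt (fun s : ℝ => F (ζ + s)) (F0 ζ) 0)
    (d1 : ∀ ζ, HasDerivAt (fun s : ℝ => F (ζ + s * Complex.I)) (F1 ζ) 0) : ContDiff ℝ 1 F := by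
  rw [contDiff_one_iff_hasFDerivAt]
  refine ⟨_, ?_, pa_partials h0 h1 d0 d1⟩
  exact ((ContinuousLinearMap.smulRightL ℝ ℂ E Complex.reCLM).continuous.comp h0).add
    ((ContinuousLinearMap.smulRightL ℝ ℂ E Complex.imCLM).continuous.comp h1)

theorem pa_contDiff_two {F F0 F1 F00 F01 F10 F11 : ℂ → E}
    (c00 : Continuous F00) (c01 : Continuous F01) (c10 : Continuous F10) (c11 : Continuous F11)
    (d0 : ∀ ζ, HasDerivAt (fun s : ℝ => F (ζ + s)) (F0 ζ) 0)
    (d1 : ∀ ζ, HasDerivAt (fun s : ℝ => F (ζ + s * Complex.I)) (F1 ζ) 0)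
    (d00 : ∀ ζ, HasDerivAt (fun s : ℝ => F0 (ζ + s)) (F00 ζ) 0)
    (d01 : ∀ ζ, HasDerivAt (fun s : ℝ => F0 (ζ + s * Complex.I)) (F01 ζ) 0)
    (d10 : ∀ ζ, HasDerivAt (fun s : ℝ => F1 (ζ + s)) (F10 ζ) 0)
    (d11 : ∀ ζ, HasDerivAt (fun s : ℝ => F1 (ζ + s * Complex.I)) (F11 ζ) 0) :
    ContDiff ℝ 2 F := by
  have h0 := pa_contDiff_one c00 c01 d00 d01
  have h1 := pa_contDiff_one c10 c11 d10 d11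
  have hF := pa_partials h0.continuous h1.continuous d0 d1
  refine (contDiff_succ_iff_hasFDerivAt (n := 1)).2 ?_
  refine ⟨_, ?_, hF⟩
  exact ((ContinuousLinearMap.smulRightL ℝ ℂ E Complex.reCLM).contDiff.comp h0).add
    ((ContinuousLinearMap.smulRightL ℝ ℂ E Complex.imCLM).contDiff.comp h1)

end PartA

section PartB

open MeasureTheory UnitAddTorus

noncomputable local instance instMSUnitAddCircle : MeasureSpace UnitAddCircle := ⟨AddCircle.haarAddCircle⟩

local instance instHaarUnitAddCircle :
    Measure.IsAddHaarMeasure (volume : Measure UnitAddCircle) :=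
  inferInstanceAs (Measure.IsAddHaarMeasure AddCircle.haarAddCircle)

local instance instProbUnitAddCircle : IsProbabilityMeasure (volume : Measure UnitAddCircle) :=
  inferInstanceAs (IsProbabilityMeasure AddCircle.haarAddCircle)

abbrev TT : Type := UnitAddTorus (Fin 2)

abbrev KK : Type := Fin 2 → ℤ

/-- The one-parameter subgroup of the torus in the direction `a`. -/
def tshift (a : Fin 2) (s : ℝ) : TT := Pi.single a (s : UnitAddCircle)

theorem tshift_zero (a : Fin 2) : tshift a 0 = 0 := by
  simp [tshift]

theorem tshift_add (a : Fin 2) (s r : ℝ) : tshift a (s + r) = tshift a s + tshift a r := by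
  simp [tshift, Pi.single_add]

theorem continuous_tshift (a : Fin 2) : Continuous (tshift a) := by
  have h : Continuous fun s : ℝ => (s : UnitAddCircle) := AddCircle.continuous_mk' 1
  unfold tshift
  exact (continuous_single (A := fun _ : Fin 2 => UnitAddCircle) a).comp h

/-- `f'` is the partial derivative of `f` in direction `a`. -/
def HasD {F : Type*} [NormedAddCommGroup F] [NormedSpace ℝ F] (a : Fin 2) (f f' : TT → F) : Prop :=
  ∀ t, HasDerivAt (fun s : ℝ => f (t + tshift a s)) (f' t) 0

theorem HasD.at {F : Type*} [NormedAddCommGroup F] [NormedSpace ℝ F] {a : Fin 2} {f f' : TT → F}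
    (h : HasD a f f') (t : TT) (s : ℝ) :
    HasDerivAt (fun r : ℝ => f (t + tshift a r)) (f' (t + tshift a s)) s := by
  have h1 := h (t + tshift a s)
  have h2 := HasDerivAt.comp_sub_const (f := fun r : ℝ => f (t + tshift a s + tshift a r)) s s
    (by simpa using h1)
  convert h2 using 2 with r
  rw [add_assoc, ← tshift_add]
  simp

theorem mFourier_tshift (k : KK) (a : Fin 2) (s : ℝ) (t : TT) :
    mFourier k (t + tshift a s) = mFourier k t * Complex.exp (2 * Real.pi * Complex.I * k a * s) := by
  have h1 : mFourier k (t + tshift a s) = mFourier k t * mFourier k (tshift a s) := by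
    simp only [mFourier, ContinuousMap.coe_mk, ← Finset.prod_mul_distrib, Pi.add_apply]
    refine Finset.prod_congr rfl fun i _ => ?_
    rw [fourier_apply, fourier_apply, fourier_apply, smul_add, AddCircle.toCircle_add]
    simp
  rw [h1]
  congr 1
  simp only [mFourier, ContinuousMap.coe_mk]
  rw [Finset.prod_eq_single a]
  · simp only [tshift, Pi.single_eq_same]
    rw [fourier_coe_apply]
    congr 1
    push_cast
    ring
  · intro b _ hb
    simp [tshift, Pi.single_eq_of_ne hb]
  · simp

theorem hasD_mFourier (k : KK) (a : Fin 2) :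
    HasD a (mFourier k) (fun t => 2 * Real.pi * Complex.I * k a * mFourier k t) := by
  intro t
  simp only [mFourier_tshift]
  have h : HasDerivAt (fun s : ℝ => Complex.exp (2 * Real.pi * Complex.I * k a * s))
      (2 * Real.pi * Complex.I * k a) 0 := by
    have := (((hasDerivAt_id (0 : ℝ)).ofReal_comp).const_mul (2 * Real.pi * Complex.I * k a : ℂ)).cexp
    simpa using this
  have := h.const_mul (mFourier k t)
  rw [mul_comm (mFourier k t) _] at this
  exact this

theorem norm_mFourier_apply (k : KK) (t : TT) : ‖mFourier k t‖ = 1 := by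
  simp only [mFourier, fourier_apply, ContinuousMap.coe_mk, norm_prod, Circle.norm_coe,
    Finset.prod_const_one]

/-- Fourier coefficients of a real function. -/
noncomputable def cf (f : TT → ℝ) (k : KK) : ℂ := mFourierCoeff (fun t => (f t : ℂ)) k

theorem mcoeff_mFourier (m n : KK) : mFourierCoeff (mFourier m) n = if m = n then 1 else 0 := by
  rw [← mFourierCoeff_toLp, ← mFourierBasis_repr]
  have : (ContinuousMap.toLp 2 volume ℂ) (mFourier m) = mFourierBasis m := by
    rw [coe_mFourierBasis]
  rw [this, HilbertBasis.repr_self]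
  by_cases h : m = n
  · subst h; simp
  · rw [lp.single_apply_ne _ _ _ (Ne.symm h), if_neg h]

theorem tint {F : Type*} [NormedAddCommGroup F] {f : TT → F} (hf : Continuous f) :
    Integrable f volume := by
  have := hf.continuousOn.integrableOn_compact (μ := volume) (isCompact_univ (X := TT))
  rwa [integrableOn_univ] at this

theorem mcoeff_hasSum {ι : Type*} [Countable ι] {m : ι → KK} {b : ι → ℂ}
    (hb : Summable fun i => ‖b i‖) {F : TT → ℂ}
    (hF : ∀ t, HasSum (fun i => b i * mFourier (m i) t) (F t)) (n : KK) :
    HasSum (fun i => if m i = n then b i else 0) (mFourierCoeff F n) := by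
  have key := hasSum_integral_of_summable_integral_norm (μ := (volume : Measure TT))
    (F := fun i t => mFourier (-n) t * (b i * mFourier (m i) t)) ?_ ?_
  · have e1 : ∀ i, ∫ t, mFourier (-n) t * (b i * mFourier (m i) t)
        = if m i = n then b i else 0 := by
      intro i
      have := mcoeff_mFourier (m i) n
      unfold mFourierCoeff at this
      simp only [smul_eq_mul] at this
      simp_rw [mul_left_comm _ (b i)]
      rw [integral_const_mul, this]
      simp
    have e2 : ∫ t, ∑' i, mFourier (-n) t * (b i * mFourier (m i) t) = mFourierCoeff F n := by
      unfold mFourierCoeff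
      refine integral_congr_ae (Eventually.of_forall fun t => ?_)
      simp only [tsum_mul_left, (hF t).tsum_eq, smul_eq_mul]
    simp only [e1] at key
    rwa [e2] at key
  · intro i
    apply tint
    fun_prop
  · simp only [norm_mul, norm_mFourier_apply, one_mul, mul_one]
    simpa using hb

/-- The Wiener norm. -/
noncomputable def An (f : TT → ℝ) : ENNReal := ∑' k, ‖cf f k‖ₑ

theorem An_le_of_hasSum {ι : Type*} [Countable ι] {m : ι → KK} {b : ι → ℂ}
    (hb : Summable fun i => ‖b i‖) {F : TT → ℝ}
    (hF : ∀ t, HasSum (fun i => b i * mFourier (m i) t) (F t : ℂ)) :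
    An F ≤ ∑' i, ‖b i‖ₑ := by
  have h1 : ∀ n, ‖cf F n‖ₑ ≤ ∑' i, if m i = n then ‖b i‖ₑ else 0 := by
    intro n
    have := (mcoeff_hasSum hb hF n).tsum_eq
    unfold cf
    rw [← this]
    refine (enorm_tsum_le_tsum_enorm).trans (le_of_eq ?_)
    refine tsum_congr fun i => ?_
    split_ifs <;> simp
  unfold An
  refine (ENNReal.tsum_le_tsum h1).trans ?_
  rw [ENNReal.tsum_comm]
  refine ENNReal.tsum_le_tsum fun i => ?_
  rw [tsum_eq_single (m i)]
  · simp
  · intro n hn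
    simp [Ne.symm hn]

theorem summable_of_tsum_enorm {ι : Type*} {b : ι → ℂ} (h : ∑' i, ‖b i‖ₑ ≠ ⊤) :
    Summable fun i => ‖b i‖ := by
  have := ENNReal.summable_toReal h
  simpa using this

theorem An_summable {f : TT → ℝ} (h : An f ≠ ⊤) : Summable fun k => ‖cf f k‖ :=
  summable_of_tsum_enorm h

theorem An_hasSum {f : TT → ℝ} (hf : Continuous f) (h : An f ≠ ⊤) (t : TT) :
    HasSum (fun k => cf f k * mFourier k t) (f t : ℂ) := by
  have := hasSum_mFourier_series_apply_of_summable
    (f := ⟨fun t => (f t : ℂ), by fun_prop⟩) (An_summable h).of_norm t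
  simpa using! this

theorem An_sup {f : TT → ℝ} (hf : Continuous f) (h : An f ≠ ⊤) (t : TT) : |f t| ≤ (An f).toReal := by
  have h1 := An_hasSum hf h t
  have h2 : ‖(f t : ℂ)‖ₑ ≤ An f := by
    rw [← h1.tsum_eq]
    refine (enorm_tsum_le_tsum_enorm).trans (le_of_eq ?_)
    refine tsum_congr fun i => ?_
    rw [enorm_mul, ← ofReal_norm (mFourier i t), norm_mFourier_apply]
    simp
  have := ENNReal.toReal_mono h h2
  simpa using this

theorem An_mul {f g : TT → ℝ} (hf : Continuous f) (hg : Continuous g) (h : An f ≠ ⊤)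
    (h' : An g ≠ ⊤) : An (fun t => f t * g t) ≤ An f * An g := by
  have hs : Summable fun p : KK × KK => ‖cf f p.1 * cf g p.2‖ := by
    have := (An_summable h).mul_of_nonneg (An_summable h') (fun _ => norm_nonneg _)
      (fun _ => norm_nonneg _)
    simpa using this
  refine (An_le_of_hasSum (ι := KK × KK) (m := fun p => p.1 + p.2)
    (b := fun p => cf f p.1 * cf g p.2) hs ?_).trans (le_of_eq ?_)
  · intro t
    have h1 := An_hasSum hf h t
    have h2 := An_hasSum hg h' t
    have := h1.mul h2 ?_
    · push_cast
      refine this.congr_fun ?_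
      intro p
      rw [mFourier_add]
      ring
    · refine Summable.of_norm (hs.congr fun p => ?_)
      simp [norm_mFourier_apply]
  · rw [ENNReal.tsum_prod (f := fun k l => ‖cf f k * cf g l‖ₑ)]
    simp only [enorm_mul, ENNReal.tsum_mul_left, ENNReal.tsum_mul_right, An]

theorem cf_add {f g : TT → ℝ} (hf : Continuous f) (hg : Continuous g) (k : KK) :
    cf (fun t => f t + g t) k = cf f k + cf g k := by
  unfold cf mFourierCoeff
  rw [← integral_add]
  · congr 1; funext t; simp; ring
  · apply tint; fun_prop
  · apply tint; fun_prop

theorem cf_const_mul (c : ℝ) (f : TT → ℝ) (k : KK) :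
    cf (fun t => c * f t) k = c * cf f k := by
  unfold cf mFourierCoeff
  rw [← integral_const_mul]
  congr 1; funext t; simp; ring

theorem cf_sub {f g : TT → ℝ} (hf : Continuous f) (hg : Continuous g) (k : KK) :
    cf (fun t => f t - g t) k = cf f k - cf g k := by
  have h1 := cf_add hf (g := fun t => (-1) * g t) (by fun_prop) k
  rw [cf_const_mul] at h1
  simp only [neg_mul, one_mul, Complex.ofReal_neg, Complex.ofReal_one] at h1
  simpa [sub_eq_add_neg] using h1

theorem An_add {f g : TT → ℝ} (hf : Continuous f) (hg : Continuous g) :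
    An (fun t => f t + g t) ≤ An f + An g := by
  unfold An
  rw [← ENNReal.tsum_add]
  refine ENNReal.tsum_le_tsum fun k => ?_
  rw [cf_add hf hg]
  exact enorm_add_le _ _

theorem An_const_mul (c : ℝ) (f : TT → ℝ) :
    An (fun t => c * f t) = ‖c‖ₑ * An f := by
  unfold An
  rw [← ENNReal.tsum_mul_left]
  refine tsum_congr fun k => ?_
  rw [cf_const_mul, enorm_mul]
  congr 1
  rw [← ofReal_norm, ← ofReal_norm]
  simp

theorem An_sum {ι : Type*} (s : Finset ι) {f : ι → TT → ℝ} (hf : ∀ i, Continuous (f i)) :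
    An (fun t => ∑ i ∈ s, f i t) ≤ ∑ i ∈ s, An (f i) := by
  classical
  induction s using Finset.induction_on with
  | empty =>
    simp only [Finset.sum_empty]
    have := An_const_mul 0 (fun _ => 0)
    simp only [mul_zero, enorm_zero, zero_mul] at this
    exact this.le
  | insert i s his ih =>
    simp only [Finset.sum_insert his]
    refine (An_add (hf i) (by fun_prop)).trans ?_
    gcongr

/-- Parseval. -/
theorem parseval_complex {f : TT → ℂ} (hf : Continuous f) :
    HasSum (fun k => ‖mFourierCoeff f k‖ ^ 2) (∫ t, ‖f t‖ ^ 2) := by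
  let fc : C(TT, ℂ) := ⟨f, hf⟩
  have h := hasSum_sq_mFourierCoeff (ContinuousMap.toLp 2 volume ℂ fc)
  simp only [mFourierCoeff_toLp] at h
  have e : ∫ t, ‖(ContinuousMap.toLp 2 volume ℂ fc) t‖ ^ 2 = ∫ t, ‖f t‖ ^ 2 := by
    refine integral_congr_ae ?_
    filter_upwards [ContinuousMap.coeFn_toLp (p := 2) (𝕜 := ℂ) volume fc] with t ht
    rw [ht]
    rfl
  rw [e] at h
  exact h

theorem parseval {f : TT → ℝ} (hf : Continuous f) :
    HasSum (fun k => ‖cf f k‖ ^ 2) (∫ t, (f t) ^ 2) := by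
  have := parseval_complex (f := fun t => (f t : ℂ)) (by fun_prop)
  simpa [cf] using this

theorem cf_HasD {a : Fin 2} {f f' : TT → ℝ} (hf : Continuous f) (hf' : Continuous f')
    (h : HasD a f f') (k : KK) : cf f' k = 2 * Real.pi * Complex.I * k a * cf f k := by
  -- the translated coefficient
  have h1 : ∀ s : ℝ, ∫ t, mFourier (-k) t * (f (t + tshift a s) : ℂ)
      = Complex.exp (2 * Real.pi * Complex.I * k a * s) * cf f k := by
    intro s
    have e1 : ∀ t : TT, mFourier (-k) t * (f (t + tshift a s) : ℂ)
        = (fun r : TT => Complex.exp (2 * Real.pi * Complex.I * k a * s) *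
            (mFourier (-k) r * (f r : ℂ))) (t + tshift a s) := by
      intro t
      simp only [mFourier_tshift]
      have : Complex.exp (2 * Real.pi * Complex.I * k a * s) *
        Complex.exp (2 * Real.pi * Complex.I * ((-k) a : ℤ) * s) = 1 := by
        rw [← Complex.exp_add]
        simp
      linear_combination (- mFourier (-k) t * (f (t + tshift a s) : ℂ)) * this
    simp_rw [e1]
    rw [integral_add_right_eq_self (μ := (volume : Measure TT))
      (fun r : TT => Complex.exp (2 * Real.pi * Complex.I * k a * s) *
            (mFourier (-k) r * (f r : ℂ))), integral_const_mul]
    rfl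
  obtain ⟨C, hC⟩ : ∃ C, ∀ t, ‖f' t‖ ≤ C := by
    obtain ⟨C, hC⟩ := isCompact_univ.exists_bound_of_continuousOn hf'.continuousOn
    exact ⟨C, fun t => hC t trivial⟩
  have h2 := hasDerivAt_integral_of_dominated_loc_of_deriv_le (μ := (volume : Measure TT))
    (F := fun (s : ℝ) (t : TT) => mFourier (-k) t * (f (t + tshift a s) : ℂ))
    (F' := fun (s : ℝ) (t : TT) => mFourier (-k) t * (f' (t + tshift a s) : ℂ))
    (x₀ := 0) (s := Set.univ) (bound := fun _ => C) Filter.univ_mem ?_ ?_ ?_ ?_ ?_ ?_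
  · have h3 := h2.2
    simp only [h1, tshift_zero, add_zero] at h3
    have h4 : HasDerivAt (fun s : ℝ => Complex.exp (2 * Real.pi * Complex.I * k a * s) * cf f k)
        (2 * Real.pi * Complex.I * k a * cf f k) 0 := by
      have := (((hasDerivAt_id (0 : ℝ)).ofReal_comp).const_mul
        (2 * Real.pi * Complex.I * k a : ℂ)).cexp.mul_const (cf f k)
      simpa using this
    exact h3.unique h4
  · refine Eventually.of_forall fun s => ?_
    refine (tint ?_).aestronglyMeasurable
    fun_prop
  · apply tint
    fun_prop
  · refine (tint ?_).aestronglyMeasurable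
    fun_prop
  · refine Eventually.of_forall fun t s _ => ?_
    rw [norm_mul, norm_mFourier_apply, one_mul, Complex.norm_real]
    exact hC _
  · exact integrable_const _
  · refine Eventually.of_forall fun t s _ => ?_
    exact ((h.at t s).ofReal_comp).const_mul _

end PartB

section PartC

open MeasureTheory UnitAddTorus

attribute [local instance] instMSUnitAddCircle instHaarUnitAddCircle instProbUnitAddCircle

theorem wsum_aux : Summable fun k : KK => (1 / (1 + 4 * Real.pi ^ 2 * ((k 0 : ℝ) ^ 2 + (k 1 : ℝ) ^ 2))) ^ 2 := by
  have h := EisensteinSeries.summable_one_div_norm_rpow (k := 4) (by norm_num)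
  refine Summable.of_norm_bounded_eventually (g := fun k : KK => ‖k‖ ^ (-(4 : ℝ))) h ?_
  have : ∀ᶠ k : KK in cofinite, k ≠ 0 := by
    exact (Set.finite_singleton (0 : KK)).subset (by intro k hk; simpa using hk)
  filter_upwards [this] with k hk
  have hk0 : 0 < ‖k‖ := norm_pos_iff.2 hk
  have h1 : ‖k‖ ^ 2 ≤ 1 + 4 * Real.pi ^ 2 * ((k 0 : ℝ) ^ 2 + (k 1 : ℝ) ^ 2) := by
    have h2 : ‖k‖ ^ 2 ≤ (k 0 : ℝ) ^ 2 + (k 1 : ℝ) ^ 2 := by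
      have : ‖k‖ = max ‖k 0‖ ‖k 1‖ := by
        apply le_antisymm
        · rw [pi_norm_le_iff_of_nonneg (by positivity)]
          intro i
          fin_cases i <;> simp
        · exact max_le (norm_le_pi_norm k 0) (norm_le_pi_norm k 1)
      rw [this]
      rcases max_choice ‖k 0‖ ‖k 1‖ with h | h <;> rw [h, Int.norm_eq_abs, sq_abs] <;> nlinarith
    have h3 : (1 : ℝ) ≤ 4 * Real.pi ^ 2 := by nlinarith [Real.pi_gt_three]
    have h4 : 0 ≤ (k 0 : ℝ) ^ 2 + (k 1 : ℝ) ^ 2 := by positivity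
    nlinarith
  rw [Real.norm_eq_abs, abs_of_nonneg (by positivity), Real.rpow_neg hk0.le,
    show (4 : ℝ) = ((4 : ℕ) : ℝ) by norm_num, Real.rpow_natCast, one_div, inv_pow]
  apply inv_anti₀ (by positivity)
  calc ‖k‖ ^ 4 = (‖k‖ ^ 2) ^ 2 := by ring
    _ ≤ _ := by push_cast; gcongr

/-- Functions with bounded Laplacian have absolutely convergent Fourier series. -/
theorem An_lap : ∃ C : ℝ, 0 < C ∧ ∀ (f f0 f1 f00 f11 : TT → ℝ), Continuous f → Continuous f0 →
    Continuous f1 → Continuous f00 → Continuous f11 → HasD 0 f f0 → HasD 1 f f1 →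
    HasD 0 f0 f00 → HasD 1 f1 f11 → ∀ B : ℝ, 0 < B → (∀ t, |f t - (f00 t + f11 t)| ≤ B) →
    An f ≤ ENNReal.ofReal (C * B) := by
  set W : KK → ℝ := fun k => 1 + 4 * Real.pi ^ 2 * ((k 0 : ℝ) ^ 2 + (k 1 : ℝ) ^ 2) with hW
  have hW1 : ∀ k, 1 ≤ W k := fun k => by
    have : 0 ≤ 4 * Real.pi ^ 2 * ((k 0 : ℝ) ^ 2 + (k 1 : ℝ) ^ 2) := by positivity
    simp only [hW]; linarith
  set S := ∑' k, (1 / W k) ^ 2 with hS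
  have hS0 : 0 ≤ S := tsum_nonneg fun k => by positivity
  refine ⟨(S + 1) / 2, by positivity, ?_⟩
  intro f f0 f1 f00 f11 hf hf0 hf1 hf00 hf11 d0 d1 d00 d11 B hB hb
  have hcG : ∀ k, cf (fun t => f t - (f00 t + f11 t)) k = W k * cf f k := by
    intro k
    rw [cf_sub hf (by fun_prop), cf_add hf00 hf11, cf_HasD hf0 hf00 d00, cf_HasD hf hf0 d0,
      cf_HasD hf1 hf11 d11, cf_HasD hf hf1 d1]
    simp only [hW]
    push_cast
    linear_combination (- 4 * Real.pi ^ 2 * ((k 0 : ℂ) ^ 2 + (k 1 : ℂ) ^ 2) * cf f k) * Complex.I_sq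
  have hP := parseval (f := fun t => f t - (f00 t + f11 t)) (by fun_prop)
  have hinteg : ∫ t, (f t - (f00 t + f11 t)) ^ 2 ≤ B ^ 2 := by
    have : ∫ t : TT, (f t - (f00 t + f11 t)) ^ 2 ≤ ∫ t : TT, B ^ 2 := by
      apply integral_mono
      · apply tint; fun_prop
      · apply tint; fun_prop
      · intro t
        simp only
        rw [← sq_abs]
        gcongr
        exact hb t
    simpa using this
  have hpt : ∀ k, ‖cf f k‖ ≤ (B * (1 / W k) ^ 2 + (1 / B) * ‖cf (fun t => f t - (f00 t + f11 t)) k‖ ^ 2) / 2 := by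
    intro k
    rw [hcG, norm_mul, Complex.norm_real, Real.norm_eq_abs, abs_of_pos (by linarith [hW1 k])]
    have hw : 0 < W k := by linarith [hW1 k]
    set x := ‖cf f k‖
    have : (B * (1 / W k) ^ 2 + (1 / B) * (W k * x) ^ 2) / 2 - x
        = (B / W k - W k * x) ^ 2 / (2 * B) + (B * (1 / W k) ^ 2 * (1 - 1)) := by
      field_simp
      ring
    have h2 : 0 ≤ (B / W k - W k * x) ^ 2 / (2 * B) := by positivity
    linarith
  have hs : Summable fun k => (B * (1 / W k) ^ 2 + (1 / B) * ‖cf (fun t => f t - (f00 t + f11 t)) k‖ ^ 2) / 2 :=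
    ((wsum_aux.mul_left B).add (hP.summable.mul_left (1 / B))).div_const 2
  have hs2 : Summable fun k => ‖cf f k‖ := Summable.of_nonneg_of_le (fun _ => norm_nonneg _) hpt hs
  have hfin : ∑' k, ‖cf f k‖ ≤ (S + 1) / 2 * B := by
    refine (hs2.tsum_le_tsum hpt hs).trans ?_
    rw [tsum_div_const, (wsum_aux.mul_left B).tsum_add (hP.summable.mul_left (1 / B)),
      tsum_mul_left, tsum_mul_left, hP.tsum_eq]
    have : 1 / B * ∫ t, (f t - (f00 t + f11 t)) ^ 2 ≤ B := by
      rw [div_mul_eq_mul_div, one_mul, div_le_iff₀ hB]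
      nlinarith
    have e : ∑' k : KK, (1 / (1 + 4 * Real.pi ^ 2 * ((k 0 : ℝ) ^ 2 + (k 1 : ℝ) ^ 2))) ^ 2 = S := rfl
    rw [e]
    nlinarith
  unfold An
  calc ∑' k, ‖cf f k‖ₑ = ∑' k, ENNReal.ofReal ‖cf f k‖ := by simp [ofReal_norm]
    _ = ENNReal.ofReal (∑' k, ‖cf f k‖) := (ENNReal.ofReal_tsum_of_nonneg (fun _ => norm_nonneg _) hs2).symm
    _ ≤ _ := ENNReal.ofReal_le_ofReal hfin

/-- Synthesis of a real function from coefficients. -/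
noncomputable def Syn (b : KK → ℂ) (t : TT) : ℝ := (∑' k, b k * mFourier k t).re

theorem syn_summable {b : KK → ℂ} (hb : Summable fun k => ‖b k‖) (t : TT) :
    Summable fun k => b k * mFourier k t :=
  Summable.of_norm (hb.congr fun k => by simp [norm_mFourier_apply])

theorem synC_continuous {b : KK → ℂ} (hb : Summable fun k => ‖b k‖) :
    Continuous fun t => ∑' k, b k * mFourier k t := by
  refine continuous_tsum (fun k => by fun_prop) hb fun k t => ?_
  simp [norm_mFourier_apply]

theorem syn_continuous {b : KK → ℂ} (hb : Summable fun k => ‖b k‖) : Continuous (Syn b) :=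
  Complex.continuous_re.comp (synC_continuous hb)

/-- differentiation on the Fourier side -/
noncomputable def dm (a : Fin 2) (b : KK → ℂ) (k : KK) : ℂ := 2 * Real.pi * Complex.I * k a * b k

theorem syn_hasD (a : Fin 2) {b : KK → ℂ} (hb : Summable fun k => ‖b k‖)
    (hb' : Summable fun k => ‖dm a b k‖) : HasD a (Syn b) (Syn (dm a b)) := by
  intro t
  have h := hasDerivAt_tsum (𝕜 := ℝ) (g := fun k (s : ℝ) => b k * mFourier k (t + tshift a s))
    (g' := fun k (s : ℝ) => dm a b k * mFourier k (t + tshift a s)) hb' ?_ ?_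
    (y₀ := 0) (syn_summable hb _) 0
  · have h2 := Complex.reCLM.hasFDerivAt.comp_hasDerivAt (0 : ℝ) h
    simpa [tshift_zero] using! h2
  · intro k s
    have := ((hasD_mFourier k a).at t s).const_mul (b k)
    refine this.congr_deriv ?_
    simp only [dm]
    ring
  · intro k s
    simp [norm_mFourier_apply]

theorem An_syn {b : KK → ℂ} (hb : Summable fun k => ‖b k‖) : An (Syn b) ≤ ∑' k, ‖b k‖ₑ := by
  set b' : KK → ℂ := fun k => (b k + starRingEnd ℂ (b (-k))) / 2 with hb'
  have hneg : Summable fun k : KK => ‖b (-k)‖ := (Equiv.neg KK).summable_iff.2 hb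
  have hle : ∀ k, ‖b' k‖ ≤ (‖b k‖ + ‖b (-k)‖) / 2 := by
    intro k
    simp only [hb', norm_div]
    have := norm_add_le (b k) (starRingEnd ℂ (b (-k)))
    rw [RCLike.norm_conj] at this
    simp only [Complex.norm_ofNat]
    linarith
  have hs : Summable fun k => ‖b' k‖ :=
    Summable.of_nonneg_of_le (fun _ => norm_nonneg _) hle ((hb.add hneg).div_const 2)
  refine (An_le_of_hasSum (m := fun k => k) hs ?_).trans ?_
  · intro t
    have h1 := (syn_summable hb t).hasSum
    have h2 := Complex.hasSum_conj'.2 h1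
    have h3 := (Equiv.neg KK).hasSum_iff.2 h2
    have h4 := (h1.add h3).div_const 2
    have e : ((∑' k, b k * mFourier k t) + starRingEnd ℂ (∑' k, b k * mFourier k t)) / 2
        = (Syn b t : ℂ) := by
      rw [Complex.add_conj]
      simp [Syn]
    rw [e] at h4
    refine h4.congr_fun ?_
    intro k
    simp only [Function.comp_apply, Equiv.neg_apply, map_mul, mFourier_neg, hb', Complex.conj_conj]
    ring
  · have h1 : ∀ k, ‖b' k‖ₑ ≤ (‖b k‖ₑ + ‖b (-k)‖ₑ) / 2 := by
      intro k
      rw [← ofReal_norm, ← ofReal_norm, ← ofReal_norm, ← ENNReal.ofReal_add (by positivity) (by positivity)]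
      have : (2 : ENNReal) = ENNReal.ofReal 2 := by simp
      rw [this, ← ENNReal.ofReal_div_of_pos (by norm_num)]
      exact ENNReal.ofReal_le_ofReal (hle k)
    refine (ENNReal.tsum_le_tsum h1).trans (le_of_eq ?_)
    simp only [ENNReal.div_eq_inv_mul]
    rw [ENNReal.tsum_mul_left, ENNReal.tsum_add]
    have : ∑' k : KK, ‖b (-k)‖ₑ = ∑' k, ‖b k‖ₑ := (Equiv.neg KK).tsum_eq (fun k => ‖b k‖ₑ)
    rw [this, ← two_mul, ← mul_assoc, ENNReal.inv_mul_cancel (by norm_num) (by norm_num), one_mul]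

theorem syn_l2 {b : KK → ℂ} (hb : Summable fun k => ‖b k‖) :
    Summable (fun k => ‖b k‖ ^ 2) ∧ ∫ t, (Syn b t) ^ 2 ≤ ∑' k, ‖b k‖ ^ 2 := by
  have hP := parseval_complex (synC_continuous hb)
  have hc : ∀ n, mFourierCoeff (fun t => ∑' k, b k * mFourier k t) n = b n := by
    intro n
    have := mcoeff_hasSum (m := fun k => k) hb (fun t => (syn_summable hb t).hasSum) n
    refine this.unique ?_
    have h := hasSum_ite_eq n (b n)
    refine h.congr_fun ?_
    intro k
    by_cases hk : k = n <;> simp [hk]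
  simp only [hc] at hP
  refine ⟨hP.summable, ?_⟩
  rw [hP.tsum_eq]
  apply integral_mono
  · apply tint
    have := syn_continuous hb
    fun_prop
  · apply tint
    have := synC_continuous hb
    fun_prop
  · intro t
    simp only [Syn]
    rw [← sq_abs]
    gcongr
    exact Complex.abs_re_le_norm _

theorem syn_sub {b b' : KK → ℂ} (hb : Summable fun k => ‖b k‖) (hb' : Summable fun k => ‖b' k‖)
    (t : TT) : Syn (fun k => b k - b' k) t = Syn b t - Syn b' t := by
  unfold Syn
  rw [← Complex.sub_re, ← (syn_summable hb t).tsum_sub (syn_summable hb' t)]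
  congr 2
  funext k
  ring

end PartC

section PartD

open MeasureTheory UnitAddTorus

theorem theta_real : ∃ θ : ℝ → ℝ, ContDiff ℝ (⊤ : ℕ∞) θ ∧ Function.Periodic θ 1 ∧
    ∀ x, |x| < 1 / 6 → θ x = x := by
  refine ⟨fun x => Real.smoothTransition (4 * Real.cos (2 * Real.pi * x) - 1) *
    (Real.arcsin (Real.sin (2 * Real.pi * x)) / (2 * Real.pi)), ?_, ?_, ?_⟩
  · rw [contDiff_iff_contDiffAt]
    intro x
    by_cases hx : 0 < Real.cos (2 * Real.pi * x)
    · have h1 : Real.sin (2 * Real.pi * x) ≠ -1 := by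
        intro h
        have := Real.sin_sq_add_cos_sq (2 * Real.pi * x)
        rw [h] at this
        nlinarith
      have h2 : Real.sin (2 * Real.pi * x) ≠ 1 := by
        intro h
        have := Real.sin_sq_add_cos_sq (2 * Real.pi * x)
        rw [h] at this
        nlinarith
      have h3 : ContDiffAt ℝ (⊤ : ℕ∞) (fun x => Real.arcsin (Real.sin (2 * Real.pi * x))) x := by
        have ha := Real.contDiffAt_arcsin (n := ((⊤ : ℕ∞) : WithTop ℕ∞)) h1 h2
        have hb : ContDiffAt ℝ (⊤ : ℕ∞) (fun x => Real.sin (2 * Real.pi * x)) x := by fun_prop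
        exact ContDiffAt.comp (g := Real.arcsin) (f := fun x => Real.sin (2 * Real.pi * x)) x ha hb
      have h4 : ContDiffAt ℝ (⊤ : ℕ∞)
          (fun x => Real.smoothTransition (4 * Real.cos (2 * Real.pi * x) - 1)) x := by
        have hb : ContDiff ℝ (⊤ : ℕ∞) (fun x => 4 * Real.cos (2 * Real.pi * x) - 1) := by fun_prop
        exact (Real.smoothTransition.contDiff.comp hb).contDiffAt
      exact h4.mul (h3.div_const _)
    · have hev : (fun x => Real.smoothTransition (4 * Real.cos (2 * Real.pi * x) - 1) *
          (Real.arcsin (Real.sin (2 * Real.pi * x)) / (2 * Real.pi))) =ᶠ[𝓝 x] fun _ => 0 := by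
        have hc : Continuous fun x => Real.cos (2 * Real.pi * x) := by fun_prop
        have : ∀ᶠ y in 𝓝 x, Real.cos (2 * Real.pi * y) < 1 / 4 :=
          hc.continuousAt.eventually_lt continuousAt_const (by linarith)
        filter_upwards [this] with y hy
        rw [Real.smoothTransition.zero_of_nonpos (by linarith), zero_mul]
      exact contDiffAt_const.congr_of_eventuallyEq hev
  · intro x
    have e : 2 * Real.pi * (x + 1) = 2 * Real.pi * x + 2 * Real.pi := by ring
    simp only [e, Real.cos_add_two_pi, Real.sin_add_two_pi]
  · intro x hx
    rw [abs_lt] at hx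
    have hp := Real.pi_pos
    have h1 : 1 / 2 ≤ Real.cos (2 * Real.pi * x) := by
      rw [← Real.cos_abs, ← Real.cos_pi_div_three]
      apply Real.cos_le_cos_of_nonneg_of_le_pi (abs_nonneg _) (by linarith)
      rw [abs_le]
      constructor <;> nlinarith
    simp only
    rw [Real.smoothTransition.one_of_one_le (by linarith), one_mul, Real.arcsin_sin (by nlinarith)
      (by nlinarith)]
    field_simp

/-- Lift of a periodic function to the torus. -/
noncomputable def plift {φ : ℝ → ℝ} (h : Function.Periodic φ 1) (a : Fin 2) (t : TT) : ℝ :=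
  h.lift (t a)

theorem plift_continuous {φ : ℝ → ℝ} (h : Function.Periodic φ 1) (hc : Continuous φ) (a : Fin 2) :
    Continuous (plift h a) := by
  have h1 : Continuous (h.lift : UnitAddCircle → ℝ) := continuous_coinduced_dom.2 hc
  exact h1.comp (continuous_apply a)

theorem plift_hasD_same {φ φ' : ℝ → ℝ} (h : Function.Periodic φ 1) (h' : Function.Periodic φ' 1)
    (hd : ∀ x, HasDerivAt φ (φ' x) x) (a : Fin 2) : HasD a (plift h a) (plift h' a) := by
  intro t
  obtain ⟨x, hx⟩ := QuotientAddGroup.mk_surjective (t a)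
  have e1 : plift h' a t = φ' x := by
    simp only [plift, ← hx]
    rfl
  have e2 : (fun s : ℝ => plift h a (t + tshift a s)) = fun s => φ (x + s) := by
    funext s
    simp only [plift, tshift, Pi.add_apply, Pi.single_eq_same, ← hx]
    rfl
  rw [e1, e2]
  have := HasDerivAt.comp_const_add (f := φ) (f' := φ' x) x 0 (by simpa using hd x)
  exact this

theorem plift_hasD_ne {φ : ℝ → ℝ} (h : Function.Periodic φ 1) {a b : Fin 2} (hab : b ≠ a) :
    HasD b (plift h a) (fun _ => 0) := by
  intro t
  have : (fun s : ℝ => plift h a (t + tshift b s)) = fun _ => plift h a t := by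
    funext s
    simp [plift, tshift, Pi.single_eq_of_ne (Ne.symm hab)]
  rw [this]
  exact hasDerivAt_const _ _

theorem hasD_zero (a : Fin 2) : HasD a (fun _ : TT => (0 : ℝ)) (fun _ => 0) := fun _ =>
  hasDerivAt_const _ _

theorem An_zero : An (fun _ : TT => (0 : ℝ)) = 0 := by
  have := An_const_mul 0 (fun _ => 0)
  simpa using this

theorem plift_An {φ φ' φ'' : ℝ → ℝ} (h : Function.Periodic φ 1) (h' : Function.Periodic φ' 1)
    (h'' : Function.Periodic φ'' 1) (hc : Continuous φ'')
    (hd : ∀ x, HasDerivAt φ (φ' x) x) (hd' : ∀ x, HasDerivAt φ' (φ'' x) x) (a : Fin 2) :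
    An (plift h a) ≠ ⊤ := by
  obtain ⟨C, hC, H⟩ := An_lap
  have c0 := plift_continuous h (continuous_iff_continuousAt.2 fun x => (hd x).continuousAt) a
  have c1 := plift_continuous h' (continuous_iff_continuousAt.2 fun x => (hd' x).continuousAt) a
  have c2 := plift_continuous h'' hc a
  obtain ⟨B, hB⟩ : ∃ B, ∀ t, |plift h a t - plift h'' a t| ≤ B := by
    obtain ⟨B, hB⟩ := (isCompact_univ (X := TT)).exists_bound_of_continuousOn
      (c0.sub c2).continuousOn
    exact ⟨B, fun t => hB t trivial⟩
  have hB' : ∀ t, |plift h a t - plift h'' a t| ≤ |B| + 1 := fun t =>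
    (hB t).trans (by linarith [le_abs_self B])
  have hpos : 0 < |B| + 1 := by positivity
  have z : Continuous fun _ : TT => (0 : ℝ) := continuous_const
  fin_cases a
  · have := H _ _ _ _ _ c0 c1 z c2 z (plift_hasD_same h h' hd 0) (plift_hasD_ne h (by decide))
      (plift_hasD_same h' h'' hd' 0) (hasD_zero 1) (|B| + 1) hpos (by simpa using hB')
    exact ne_top_of_le_ne_top ENNReal.ofReal_ne_top this
  · have := H _ _ _ _ _ c0 z c1 z c2 (plift_hasD_ne h (by decide)) (plift_hasD_same h h' hd 1)
      (hasD_zero 0) (plift_hasD_same h' h'' hd' 1) (|B| + 1) hpos (by simpa using hB')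
    exact ne_top_of_le_ne_top ENNReal.ofReal_ne_top this

/-- Functions with two derivatives, all with bounded Wiener norm. -/
structure W2 (R : ENNReal) (f : TT → ℝ) (fd : Fin 2 → TT → ℝ) (fdd : Fin 2 → Fin 2 → TT → ℝ) :
    Prop where
  c0 : Continuous f
  c1 : ∀ a, Continuous (fd a)
  c2 : ∀ a b, Continuous (fdd a b)
  d1 : ∀ a, HasD a f (fd a)
  d2 : ∀ a b, HasD b (fd a) (fdd a b)
  n0 : An f ≤ R
  n1 : ∀ a, An (fd a) ≤ R
  n2 : ∀ a b, An (fdd a b) ≤ R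

theorem HasD.add {F : Type*} [NormedAddCommGroup F] [NormedSpace ℝ F] {a : Fin 2}
    {f f' g g' : TT → F} (h : HasD a f f') (h2 : HasD a g g') :
    HasD a (fun t => f t + g t) (fun t => f' t + g' t) := fun t => (h t).add (h2 t)

theorem HasD.const_mul {a : Fin 2} {f f' : TT → ℝ} (h : HasD a f f') (c : ℝ) :
    HasD a (fun t => c * f t) (fun t => c * f' t) := fun t => (h t).const_mul c

theorem HasD.mul {a : Fin 2} {f f' g g' : TT → ℝ} (h : HasD a f f') (h2 : HasD a g g') :
    HasD a (fun t => f t * g t) (fun t => f' t * g t + f t * g' t) := fun t => by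
  have := (h t).mul (h2 t)
  simpa [tshift_zero] using! this

theorem HasD.sum {ι : Type*} {a : Fin 2} (s : Finset ι) {f f' : ι → TT → ℝ}
    (h : ∀ i, HasD a (f i) (f' i)) :
    HasD a (fun t => ∑ i ∈ s, f i t) (fun t => ∑ i ∈ s, f' i t) := fun t => by
  exact HasDerivAt.fun_sum fun i _ => h i t

theorem W2.mono {R R' : ENNReal} {f fd fdd} (h : W2 R f fd fdd) (hR : R ≤ R') : W2 R' f fd fdd :=
  ⟨h.c0, h.c1, h.c2, h.d1, h.d2, h.n0.trans hR, fun a => (h.n1 a).trans hR,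
    fun a b => (h.n2 a b).trans hR⟩

theorem W2.add {R R' : ENNReal} {f fd fdd g gd gdd} (h : W2 R f fd fdd) (h' : W2 R' g gd gdd) :
    W2 (R + R') (fun t => f t + g t) (fun a t => fd a t + gd a t)
      (fun a b t => fdd a b t + gdd a b t) :=
  ⟨h.c0.add h'.c0, fun a => (h.c1 a).add (h'.c1 a), fun a b => (h.c2 a b).add (h'.c2 a b),
    fun a => (h.d1 a).add (h'.d1 a), fun a b => (h.d2 a b).add (h'.d2 a b),
    (An_add h.c0 h'.c0).trans (add_le_add h.n0 h'.n0),
    fun a => (An_add (h.c1 a) (h'.c1 a)).trans (add_le_add (h.n1 a) (h'.n1 a)),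
    fun a b => (An_add (h.c2 a b) (h'.c2 a b)).trans (add_le_add (h.n2 a b) (h'.n2 a b))⟩

theorem W2.const_mul {R : ENNReal} {f fd fdd} (h : W2 R f fd fdd) (c : ℝ) :
    W2 (‖c‖ₑ * R) (fun t => c * f t) (fun a t => c * fd a t)
      (fun a b t => c * fdd a b t) :=
  ⟨continuous_const.mul h.c0, fun a => continuous_const.mul (h.c1 a),
    fun a b => continuous_const.mul (h.c2 a b),
    fun a => (h.d1 a).const_mul c, fun a b => (h.d2 a b).const_mul c,
    (An_const_mul c f).trans_le (by gcongr; exact h.n0),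
    fun a => (An_const_mul c (fd a)).trans_le (by gcongr; exact h.n1 a),
    fun a b => (An_const_mul c (fdd a b)).trans_le (by gcongr; exact h.n2 a b)⟩

theorem W2.zero : W2 0 (fun _ => 0) (fun _ _ => 0) (fun _ _ _ => 0) :=
  ⟨continuous_const, fun _ => continuous_const, fun _ _ => continuous_const,
    fun a => hasD_zero a, fun _ b => hasD_zero b, An_zero.le, fun _ => An_zero.le,
    fun _ _ => An_zero.le⟩

theorem W2.sum {ι : Type*} (s : Finset ι) {R : ι → ENNReal} {f : ι → TT → ℝ}
    {fd : ι → Fin 2 → TT → ℝ} {fdd : ι → Fin 2 → Fin 2 → TT → ℝ}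
    (h : ∀ i, W2 (R i) (f i) (fd i) (fdd i)) :
    W2 (∑ i ∈ s, R i) (fun t => ∑ i ∈ s, f i t) (fun a t => ∑ i ∈ s, fd i a t)
      (fun a b t => ∑ i ∈ s, fdd i a b t) := by
  classical
  induction s using Finset.induction_on with
  | empty => simpa using W2.zero
  | insert i s his ih =>
    simp only [Finset.sum_insert his]
    exact (h i).add ih

theorem theta_exists : ∃ (R : ENNReal) (θ : Fin 2 → TT → ℝ) (θd : Fin 2 → Fin 2 → TT → ℝ)
    (θdd : Fin 2 → Fin 2 → Fin 2 → TT → ℝ), R ≠ ⊤ ∧ (∀ a, W2 R (θ a) (θd a) (θdd a)) ∧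
    (∀ a b, b ≠ a → ∀ t, θd a b t = 0) ∧
    (∀ a (t : TT) (x : ℝ), |x| < 1 / 6 → t a = (x : UnitAddCircle) → θd a a t = 1) := by
  obtain ⟨θ, hs, hp, hx⟩ := theta_real
  have hdiff : ∀ n : ℕ, ∀ x, HasDerivAt (iteratedDeriv n θ) (iteratedDeriv (n + 1) θ x) x := by
    intro n x
    have hd : Differentiable ℝ (iteratedDeriv n θ) :=
      hs.differentiable_iteratedDeriv n (by exact_mod_cast ENat.natCast_lt_top n)
    rw [iteratedDeriv_succ]
    exact (hd x).hasDerivAt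
  have hper : ∀ n : ℕ, Function.Periodic (iteratedDeriv n θ) 1 := by
    intro n x
    have h1 : (fun y => θ (y + 1)) = θ := funext hp
    have h2 := iteratedDeriv_comp_add_const n θ 1
    rw [h1] at h2
    exact (congrFun h2 x).symm
  have hcont : ∀ n : ℕ, Continuous (iteratedDeriv n θ) := fun n =>
    continuous_iff_continuousAt.2 fun x => (hdiff n x).continuousAt
  have hAn : ∀ n a, An (plift (hper n) a) ≠ ⊤ := fun n a =>
    plift_An (hper n) (hper (n + 1)) (hper (n + 2)) (hcont _) (hdiff n) (hdiff (n + 1)) a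
  refine ⟨∑ a : Fin 2, (An (plift (hper 0) a) + An (plift (hper 1) a) + An (plift (hper 2) a)),
    fun a => plift (hper 0) a, fun a b => if b = a then plift (hper 1) a else fun _ => 0,
    fun a b c => if b = a ∧ c = a then plift (hper 2) a else fun _ => 0, ?_, ?_, ?_, ?_⟩
  · refine ENNReal.sum_ne_top.2 fun a _ => ?_
    simp [hAn]
  · intro a
    have hle := Finset.single_le_sum (f := fun a : Fin 2 =>
      (An (plift (hper 0) a) + An (plift (hper 1) a) + An (plift (hper 2) a)))
      (fun _ _ => zero_le) (Finset.mem_univ a)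
    constructor
    · exact plift_continuous _ (hcont 0) a
    · intro b
      dsimp only
      split_ifs
      · exact plift_continuous _ (hcont 1) a
      · exact continuous_const
    · intro b c
      dsimp only
      split_ifs
      · exact plift_continuous _ (hcont 2) a
      · exact continuous_const
    · intro b
      by_cases hb : b = a
      · subst hb
        simpa using plift_hasD_same (hper 0) (hper 1) (hdiff 0) b
      · simpa [hb] using plift_hasD_ne (hper 0) hb
    · intro b c
      by_cases hb : b = a
      · subst hb
        by_cases hc : c = b
        · subst hc
          simpa using plift_hasD_same (hper 1) (hper 2) (hdiff 1) c
        · simpa [hc] using plift_hasD_ne (hper 1) hc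
      · simpa [hb] using hasD_zero c
    · exact le_trans (le_trans le_self_add le_self_add) hle
    · intro b
      dsimp only
      split_ifs
      · exact le_trans (le_trans le_add_self le_self_add) hle
      · rw [An_zero]; exact zero_le
    · intro b c
      dsimp only
      split_ifs
      · exact le_trans le_add_self hle
      · rw [An_zero]; exact zero_le
  · intro a b hb t
    simp [hb]
  · intro a t x hx1 ht
    simp only [if_true]
    have e : plift (hper 1) a t = iteratedDeriv 1 θ x := by
      simp only [plift, ht]
      rfl
    rw [e, iteratedDeriv_one]
    have hev : θ =ᶠ[𝓝 x] fun y => y := by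
      have : ∀ᶠ y in 𝓝 x, |y| < 1 / 6 :=
        continuous_abs.continuousAt.eventually_lt continuousAt_const hx1
      filter_upwards [this] with y hy using hx y hy
    rw [hev.deriv_eq]
    simp

end PartD

section PartE

open MeasureTheory UnitAddTorus

/-- Euclidean space -/
abbrev EE (N : ℕ) : Type := EuclideanSpace ℝ (Fin N)

theorem HasD.comp {F G : Type*} [NormedAddCommGroup F] [NormedSpace ℝ F] [NormedAddCommGroup G]
    [NormedSpace ℝ G] {a : Fin 2} {ψ : F → G} {ψ' : TT → F →L[ℝ] G} {g g' : TT → F}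
    (hg : HasD a g g') (hψ : ∀ x, HasFDerivAt ψ (ψ' x) (g x)) :
    HasD a (fun x => ψ (g x)) (fun x => ψ' x (g' x)) := by
  intro x
  have h1 : HasFDerivAt ψ (ψ' x) (g (x + tshift a 0)) := by
    rw [tshift_zero, add_zero]
    exact hψ x
  exact h1.comp_hasDerivAt (0 : ℝ) (hg x)

theorem HasD.clm_apply {F G : Type*} [NormedAddCommGroup F] [NormedSpace ℝ F]
    [NormedAddCommGroup G] [NormedSpace ℝ G] {a : Fin 2} {A A' : TT → F →L[ℝ] G} {g g' : TT → F}
    (hA : HasD a A A') (hg : HasD a g g') :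
    HasD a (fun x => A x (g x)) (fun x => A' x (g x) + A x (g' x)) := by
  intro x
  have := (hA x).clm_apply (hg x)
  simpa [tshift_zero] using! this

theorem HasD.const_smul {F : Type*} [NormedAddCommGroup F] [NormedSpace ℝ F]
    {a : Fin 2} {g g' : TT → F} (hg : HasD a g g') (c : ℝ) :
    HasD a (fun x => c • g x) (fun x => c • g' x) := fun x => (hg x).fun_const_smul c

theorem HasD.const_add {F : Type*} [NormedAddCommGroup F] [NormedSpace ℝ F]
    {a : Fin 2} {g g' : TT → F} (hg : HasD a g g') (c : F) :
    HasD a (fun x => c + g x) g' := fun x => (hg x).const_add c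

theorem HasD.sub_const {F : Type*} [NormedAddCommGroup F] [NormedSpace ℝ F]
    {a : Fin 2} {g g' : TT → F} (hg : HasD a g g') (c : F) :
    HasD a (fun x => g x - c) g' := fun x => (hg x).sub_const c

/-- vector valued version of `W2` -/
def VW {N : ℕ} (R : ENNReal) (g : TT → EE N) (gd : Fin 2 → TT → EE N)
    (gdd : Fin 2 → Fin 2 → TT → EE N) : Prop :=
  ∀ j, W2 R (fun t => g t j) (fun a t => gd a t j) (fun a b t => gdd a b t j)

theorem ee_cont {N : ℕ} {X : Type*} [TopologicalSpace X] {g : X → EE N}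
    (h : ∀ j, Continuous fun x => g x j) : Continuous g := by
  have : Continuous fun x => (WithLp.toLp 2 (fun j => g x j) : EE N) :=
    (PiLp.continuous_toLp 2 _).comp (continuous_pi h)
  exact this

theorem ee_hasD {N : ℕ} {a : Fin 2} {g g' : TT → EE N}
    (h : ∀ j, HasD a (fun x => g x j) (fun x => g' x j)) : HasD a g g' := by
  intro x
  have h1 : HasDerivAt (fun s : ℝ => fun j => g (x + tshift a s) j) (fun j => g' x j) 0 :=
    hasDerivAt_pi.2 fun j => h j x
  have h2 := ((PiLp.continuousLinearEquiv 2 ℝ (fun _ : Fin N => ℝ)).symm :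
    (Fin N → ℝ) →L[ℝ] EE N).hasFDerivAt.comp_hasDerivAt (0 : ℝ) h1
  exact h2

theorem ee_norm_le {N : ℕ} (w : EE N) : ‖w‖ ≤ ∑ j, |w j| := by
  have h : w = ∑ j, w j • (EuclideanSpace.single j (1 : ℝ) : EE N) := by
    ext i
    simp [Finset.sum_apply, Pi.single_apply]
  calc ‖w‖ = ‖∑ j, w j • (EuclideanSpace.single j (1 : ℝ) : EE N)‖ := by rw [← h]
    _ ≤ ∑ j, ‖w j • (EuclideanSpace.single j (1 : ℝ) : EE N)‖ := norm_sum_le _ _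
    _ = ∑ j, |w j| := by simp [norm_smul]

theorem ee_bound {N : ℕ} {R : ENNReal} (hR : R ≠ ⊤) {g : TT → EE N}
    (hc : ∀ j, Continuous fun x => g x j) (h : ∀ j, An (fun x => g x j) ≤ R) (x : TT) :
    ‖g x‖ ≤ N * R.toReal := by
  refine (ee_norm_le _).trans ?_
  have : ∀ j : Fin N, |g x j| ≤ R.toReal := fun j =>
    (An_sup (hc j) (ne_top_of_le_ne_top hR (h j)) x).trans (ENNReal.toReal_mono hR (h j))
  calc ∑ j, |g x j| ≤ ∑ j : Fin N, R.toReal := Finset.sum_le_sum fun j _ => this j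
    _ = N * R.toReal := by simp

section
variable {N : ℕ} {R : ENNReal} {g : TT → EE N} {gd : Fin 2 → TT → EE N}
    {gdd : Fin 2 → Fin 2 → TT → EE N}

theorem VW.c0 (h : VW R g gd gdd) : Continuous g := ee_cont fun j => (h j).c0
theorem VW.c1 (h : VW R g gd gdd) (a) : Continuous (gd a) := ee_cont fun j => (h j).c1 a
theorem VW.c2 (h : VW R g gd gdd) (a b) : Continuous (gdd a b) := ee_cont fun j => (h j).c2 a b
theorem VW.d1 (h : VW R g gd gdd) (a) : HasD a g (gd a) := ee_hasD fun j => (h j).d1 a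
theorem VW.d2 (h : VW R g gd gdd) (a b) : HasD b (gd a) (gdd a b) := ee_hasD fun j => (h j).d2 a b
theorem VW.b0 (h : VW R g gd gdd) (hR : R ≠ ⊤) (x) : ‖g x‖ ≤ N * R.toReal :=
  ee_bound hR (fun j => (h j).c0) (fun j => (h j).n0) x
theorem VW.b1 (h : VW R g gd gdd) (hR : R ≠ ⊤) (a x) : ‖gd a x‖ ≤ N * R.toReal :=
  ee_bound hR (fun j => (h j).c1 a) (fun j => (h j).n1 a) x
theorem VW.b2 (h : VW R g gd gdd) (hR : R ≠ ⊤) (a b x) : ‖gdd a b x‖ ≤ N * R.toReal :=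
  ee_bound hR (fun j => (h j).c2 a b) (fun j => (h j).n2 a b) x
end

theorem evbound {X F : Type*} [TopologicalSpace X] [NormedAddCommGroup F] {f : X → F} {x : X}
    (h : ContinuousAt f x) {K : ℝ} (hK : ‖f x‖ < K) : ∀ᶠ z in 𝓝 x, ‖f z‖ < K :=
  h.norm.eventually_lt continuousAt_const hK

set_option maxHeartbeats 1000000 in
theorem comp_An {N : ℕ} {U : Set (EE N)} (hU : IsOpen U) {z0 : EE N} (hz : z0 ∈ U)
    {ψ : EE N → ℝ} (hψ : ContDiffOn ℝ 2 ψ U) {R : ENNReal} (hR : R ≠ ⊤) :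
    ∃ C : ℝ, 0 < C ∧ ∀ᶠ t in 𝓝[>] (0 : ℝ), ∀ g gd gdd, VW R g gd gdd →
      (∀ x, z0 + t • g x ∈ U) ∧ An (fun x => ψ (z0 + t • g x) - ψ z0) ≤ ENNReal.ofReal (C * t) ∧
      An (fun x => ψ (z0 + t • g x)) ≤ ENNReal.ofReal C := by
  obtain ⟨C, hC, HC⟩ := An_lap
  have hD1 : ContDiffOn ℝ 1 (fderiv ℝ ψ) U := hψ.fderiv_of_isOpen hU (by norm_num)
  have hD2 : ContDiffOn ℝ 0 (fderiv ℝ (fderiv ℝ ψ)) U := hD1.fderiv_of_isOpen hU (by norm_num)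
  have hUn : U ∈ 𝓝 z0 := hU.mem_nhds hz
  have k0 : ∀ z ∈ U, HasFDerivAt ψ (fderiv ℝ ψ z) z := fun z hz =>
    ((hψ.contDiffAt (hU.mem_nhds hz)).differentiableAt (by norm_num)).hasFDerivAt
  have k1 : ∀ z ∈ U, HasFDerivAt (fderiv ℝ ψ) (fderiv ℝ (fderiv ℝ ψ) z) z := fun z hz =>
    ((hD1.contDiffAt (hU.mem_nhds hz)).differentiableAt (by norm_num)).hasFDerivAt
  set K : ℝ := ‖ψ z0‖ + ‖fderiv ℝ ψ z0‖ + ‖fderiv ℝ (fderiv ℝ ψ) z0‖ + 1 with hK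
  have hK0 : 0 < K := by positivity
  have e0 : ∀ᶠ z in 𝓝 z0, ‖ψ z‖ < K :=
    (hψ.continuousOn.continuousAt hUn).norm.eventually_lt continuousAt_const (by
      have := norm_nonneg (fderiv ℝ ψ z0); have := norm_nonneg (fderiv ℝ (fderiv ℝ ψ) z0)
      linarith)
  have e1 : ∀ᶠ z in 𝓝 z0, ‖fderiv ℝ ψ z‖ < K :=
    (hD1.continuousOn.continuousAt hUn).norm.eventually_lt continuousAt_const (by
      have := norm_nonneg (ψ z0); have := norm_nonneg (fderiv ℝ (fderiv ℝ ψ) z0)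
      linarith)
  have e2 : ∀ᶠ z in 𝓝 z0, ‖fderiv ℝ (fderiv ℝ ψ) z‖ < K := by
    refine evbound (hD2.continuousOn.continuousAt hUn) ?_
    have := norm_nonneg (ψ z0)
    have := norm_nonneg (fderiv ℝ ψ z0)
    linarith
  obtain ⟨ε, hε, hball⟩ := Metric.eventually_nhds_iff_ball.1
    (((e0.and e1).and e2).and (Filter.eventually_mem_set.2 hUn))
  set ρ : ℝ := N * R.toReal with hρ
  have hρ0 : 0 ≤ ρ := by positivity
  set Q : ℝ := 3 * K * ρ + 2 * K * ρ ^ 2 + K + 1 with hQ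
  have hQ0 : 0 < Q := by positivity
  refine ⟨C * Q, by positivity, ?_⟩
  have t1 : ∀ᶠ t in 𝓝[>] (0 : ℝ), t < 1 := by
    filter_upwards [Ioo_mem_nhdsGT (zero_lt_one (α := ℝ))] with t ht using ht.2
  have t2 : ∀ᶠ t in 𝓝[>] (0 : ℝ), t < ε / (ρ + 1) := by
    filter_upwards [Ioo_mem_nhdsGT (show (0 : ℝ) < ε / (ρ + 1) by positivity)] with t ht using ht.2
  filter_upwards [t1, t2, self_mem_nhdsWithin] with t ht1 ht2 ht0 g gd gdd hg
  have ht0 : 0 < t := ht0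
  have hmem : ∀ x, z0 + t • g x ∈ Metric.ball z0 ε := by
    intro x
    rw [mem_ball_iff_norm, add_sub_cancel_left, norm_smul, Real.norm_of_nonneg ht0.le]
    have := hg.b0 hR x
    rw [lt_div_iff₀ (by positivity)] at ht2
    nlinarith
  have hmU : ∀ x, z0 + t • g x ∈ U := fun x => (hball _ (hmem x)).2
  have hGc : Continuous fun x => z0 + t • g x := by
    have := hg.c0
    fun_prop
  have hGd : ∀ a, HasD a (fun x => z0 + t • g x) (fun x => t • gd a x) := fun a =>
    ((hg.d1 a).const_smul t).const_add z0
  have c0 : Continuous fun x => ψ (z0 + t • g x) :=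
    hψ.continuousOn.comp_continuous hGc hmU
  have c1' : Continuous fun x => fderiv ℝ ψ (z0 + t • g x) :=
    hD1.continuousOn.comp_continuous hGc hmU
  have c2' : Continuous fun x => fderiv ℝ (fderiv ℝ ψ) (z0 + t • g x) :=
    hD2.continuousOn.comp_continuous hGc hmU
  have c1 : ∀ a, Continuous fun x => fderiv ℝ ψ (z0 + t • g x) (t • gd a x) := fun a => by
    have := hg.c1 a
    fun_prop
  have c2 : ∀ a, Continuous fun x => fderiv ℝ (fderiv ℝ ψ) (z0 + t • g x) (t • gd a x)
      (t • gd a x) + fderiv ℝ ψ (z0 + t • g x) (t • gdd a a x) := fun a => by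
    have := hg.c1 a
    have := hg.c2 a a
    fun_prop
  have d1 : ∀ a, HasD a (fun x => ψ (z0 + t • g x))
      (fun x => fderiv ℝ ψ (z0 + t • g x) (t • gd a x)) := fun a =>
    (hGd a).comp fun x => k0 _ (hmU x)
  have d2 : ∀ a, HasD a (fun x => fderiv ℝ ψ (z0 + t • g x) (t • gd a x))
      (fun x => fderiv ℝ (fderiv ℝ ψ) (z0 + t • g x) (t • gd a x)
      (t • gd a x) + fderiv ℝ ψ (z0 + t • g x) (t • gdd a a x)) := fun a =>
    HasD.clm_apply ((hGd a).comp fun x => k1 _ (hmU x)) ((hg.d2 a a).const_smul t)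
  have b2 : ∀ a x, |fderiv ℝ (fderiv ℝ ψ) (z0 + t • g x) (t • gd a x)
      (t • gd a x) + fderiv ℝ ψ (z0 + t • g x) (t • gdd a a x)| ≤ t * (K * ρ ^ 2 + K * ρ) := by
    intro a x
    obtain ⟨⟨⟨q0, q1⟩, q2⟩, -⟩ := hball _ (hmem x)
    have n1 : ‖t • gd a x‖ ≤ t * ρ := by
      rw [norm_smul, Real.norm_of_nonneg ht0.le]
      exact mul_le_mul_of_nonneg_left (hg.b1 hR a x) ht0.le
    have n2 : ‖t • gdd a a x‖ ≤ t * ρ := by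
      rw [norm_smul, Real.norm_of_nonneg ht0.le]
      exact mul_le_mul_of_nonneg_left (hg.b2 hR a a x) ht0.le
    have m1 : ‖fderiv ℝ (fderiv ℝ ψ) (z0 + t • g x) (t • gd a x) (t • gd a x)‖
        ≤ K * (t * ρ) * (t * ρ) := by
      refine (ContinuousLinearMap.le_opNorm₂ _ _ _).trans ?_
      gcongr
    have m2 : ‖fderiv ℝ ψ (z0 + t • g x) (t • gdd a a x)‖ ≤ K * (t * ρ) := by
      refine (ContinuousLinearMap.le_opNorm _ _).trans ?_
      gcongr
    rw [Real.norm_eq_abs] at m1 m2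
    have m3 : K * (t * ρ) * (t * ρ) ≤ t * (K * ρ ^ 2) := by
      have : t * t ≤ t := by nlinarith
      have := mul_le_mul_of_nonneg_right this (show 0 ≤ K * ρ ^ 2 by positivity)
      nlinarith
    refine (abs_add_le _ _).trans ?_
    nlinarith
  refine ⟨hmU, ?_, ?_⟩
  · have := HC (fun x => ψ (z0 + t • g x) - ψ z0) _ _ _ _ (c0.sub continuous_const) (c1 0) (c1 1) (c2 0) (c2 1)
      ((d1 0).sub_const _) ((d1 1).sub_const _) (d2 0) (d2 1) (t * Q) (by positivity) ?_
    · rw [show C * Q * t = C * (t * Q) by ring]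
      exact this
    · intro x
      have m0 : ‖ψ (z0 + t • g x) - ψ z0‖ ≤ K * ‖z0 + t • g x - z0‖ := by
        refine (convex_ball z0 ε).norm_image_sub_le_of_norm_fderiv_le (f := ψ) (𝕜 := ℝ) ?_ ?_
          (Metric.mem_ball_self hε) (hmem x)
        · intro z hz
          exact (k0 z (hball z hz).2).differentiableAt
        · intro z hz
          exact (hball z hz).1.1.2.le
      rw [add_sub_cancel_left, norm_smul, Real.norm_of_nonneg ht0.le, Real.norm_eq_abs] at m0
      have m0' : K * (t * ‖g x‖) ≤ K * (t * ρ) := by gcongr; exact hg.b0 hR x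
      have := b2 0 x
      have := b2 1 x
      refine (abs_sub _ _).trans ?_
      have := abs_add_le (fderiv ℝ (fderiv ℝ ψ) (z0 + t • g x) (t • gd 0 x)
        (t • gd 0 x) + fderiv ℝ ψ (z0 + t • g x) (t • gdd 0 0 x))
        (fderiv ℝ (fderiv ℝ ψ) (z0 + t • g x) (t • gd 1 x)
        (t • gd 1 x) + fderiv ℝ ψ (z0 + t • g x) (t • gdd 1 1 x))
      have : 0 ≤ t * (K + 1) := by positivity
      nlinarith
  · refine HC (fun x => ψ (z0 + t • g x)) _ _ _ _ c0 (c1 0) (c1 1) (c2 0) (c2 1)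
      (d1 0) (d1 1) (d2 0) (d2 1) Q hQ0 ?_
    intro x
    have m0 := (hball _ (hmem x)).1.1.1
    rw [Real.norm_eq_abs] at m0
    have := b2 0 x
    have := b2 1 x
    refine (abs_sub _ _).trans ?_
    have := abs_add_le (fderiv ℝ (fderiv ℝ ψ) (z0 + t • g x) (t • gd 0 x)
      (t • gd 0 x) + fderiv ℝ ψ (z0 + t • g x) (t • gdd 0 0 x))
      (fderiv ℝ (fderiv ℝ ψ) (z0 + t • g x) (t • gd 1 x)
      (t • gd 1 x) + fderiv ℝ ψ (z0 + t • g x) (t • gdd 1 1 x))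
    have h5 : t * (K * ρ ^ 2 + K * ρ) ≤ K * ρ ^ 2 + K * ρ :=
      mul_le_of_le_one_left (by positivity) ht1.le
    have : 0 ≤ K * ρ := by positivity
    nlinarith

end PartE

section PartF

open MeasureTheory UnitAddTorus

theorem mult_An {N : ℕ} {U : Set (EE N)} (hU : IsOpen U) {z0 : EE N} (hz : z0 ∈ U)
    {ψ : EE N → ℝ} (hψ : ContDiffOn ℝ 3 ψ U) {R : ENNReal} (hR : R ≠ ⊤) :
    ∃ C : ℝ, 0 < C ∧ ∀ᶠ t in 𝓝[>] (0 : ℝ), ∀ g gd gdd, VW R g gd gdd →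
      (∀ x, z0 + t • g x ∈ U) ∧ ∃ md : Fin 2 → TT → ℝ,
      Continuous (fun x => ψ z0 - ψ (z0 + t • g x)) ∧ (∀ a, Continuous (md a)) ∧
      (∀ a, HasD a (fun x => ψ z0 - ψ (z0 + t • g x)) (md a)) ∧
      An (fun x => ψ z0 - ψ (z0 + t • g x)) ≤ ENNReal.ofReal (C * t) ∧
      ∀ a, An (md a) ≤ ENNReal.ofReal (C * t) := by
  obtain ⟨C0, hC0, H0⟩ := comp_An hU hz (hψ.of_le (by norm_num)) hR
  have hD1 : ContDiffOn ℝ 2 (fderiv ℝ ψ) U := hψ.fderiv_of_isOpen hU (by norm_num)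
  have k0 : ∀ z ∈ U, HasFDerivAt ψ (fderiv ℝ ψ z) z := fun z hz =>
    ((hψ.contDiffAt (hU.mem_nhds hz)).differentiableAt (by norm_num)).hasFDerivAt
  have hi : ∀ i : Fin N, ContDiffOn ℝ 2
      (fun z => fderiv ℝ ψ z (EuclideanSpace.single i (1 : ℝ))) U := fun i =>
    hD1.clm_apply contDiffOn_const
  choose Ci hCi Hi using fun i => comp_An hU hz (hi i) hR
  refine ⟨C0 + ∑ i, Ci i * R.toReal, ?_, ?_⟩
  · have : 0 ≤ ∑ i, Ci i * R.toReal :=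
      Finset.sum_nonneg fun i _ => mul_nonneg (hCi i).le ENNReal.toReal_nonneg
    linarith
  filter_upwards [H0, eventually_all.2 Hi, self_mem_nhdsWithin] with t h0 hi' ht g gd gdd hg
  have ht : 0 < t := ht
  have hS : 0 ≤ ∑ i, Ci i * R.toReal :=
      Finset.sum_nonneg fun i _ => mul_nonneg (hCi i).le ENNReal.toReal_nonneg
  obtain ⟨hm, hA, -⟩ := h0 g gd gdd hg
  have hGc : Continuous fun x => z0 + t • g x := by
    have := hg.c0
    fun_prop
  have c0 : Continuous fun x => ψ (z0 + t • g x) :=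
    hψ.continuousOn.comp_continuous hGc hm
  have c1' : Continuous fun x => fderiv ℝ ψ (z0 + t • g x) :=
    hD1.continuousOn.comp_continuous hGc hm
  have ci : ∀ i, Continuous fun x => fderiv ℝ ψ (z0 + t • g x) (EuclideanSpace.single i (1 : ℝ)) :=
    fun i => c1'.clm_apply continuous_const
  have hGd : ∀ a, HasD a (fun x => z0 + t • g x) (fun x => t • gd a x) := fun a =>
    ((hg.d1 a).const_smul t).const_add z0
  have d1 : ∀ a, HasD a (fun x => ψ (z0 + t • g x))
      (fun x => fderiv ℝ ψ (z0 + t • g x) (t • gd a x)) := fun a =>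
    (hGd a).comp fun x => k0 _ (hm x)
  have hexp : ∀ a x, fderiv ℝ ψ (z0 + t • g x) (t • gd a x) =
      t * ∑ i, fderiv ℝ ψ (z0 + t • g x) (EuclideanSpace.single i (1 : ℝ)) * gd a x i := by
    intro a x
    have h : gd a x = ∑ j, gd a x j • (EuclideanSpace.single j (1 : ℝ) : EE N) := by
      ext i
      simp [Finset.sum_apply, Pi.single_apply]
    rw [map_smul, smul_eq_mul]
    conv_lhs => rw [h]
    rw [map_sum]
    congr 1
    refine Finset.sum_congr rfl fun i _ => ?_
    rw [map_smul, smul_eq_mul, mul_comm]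
  have cp : ∀ a (i : Fin N), Continuous fun x =>
      fderiv ℝ ψ (z0 + t • g x) (EuclideanSpace.single i (1 : ℝ)) * gd a x i := fun a i =>
    (ci i).mul ((hg i).c1 a)
  refine ⟨hm, fun a x => (-t) * ∑ i,
    fderiv ℝ ψ (z0 + t • g x) (EuclideanSpace.single i (1 : ℝ)) * gd a x i,
    continuous_const.sub c0, ?_, ?_, ?_, ?_⟩
  · intro a
    exact continuous_const.mul (continuous_finsetSum _ fun i _ => cp a i)
  · intro a x
    have := ((d1 a) x).const_sub (ψ z0)
    convert this using 1
    dsimp only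
    rw [hexp, neg_mul]
  · have e : (fun x => ψ z0 - ψ (z0 + t • g x)) =
        fun x => (-1 : ℝ) * (ψ (z0 + t • g x) - ψ z0) := by
      funext x; ring
    rw [e, An_const_mul]
    simp only [enorm_neg, enorm_one, one_mul]
    refine hA.trans (ENNReal.ofReal_le_ofReal ?_)
    exact mul_le_mul_of_nonneg_right (by linarith) ht.le
  · intro a
    rw [An_const_mul, enorm_neg]
    have hsum := An_sum Finset.univ (cp a)
    have hone : ∀ i, An (fun x => fderiv ℝ ψ (z0 + t • g x) (EuclideanSpace.single i (1 : ℝ)) *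
        gd a x i) ≤ ENNReal.ofReal (Ci i * R.toReal) := by
      intro i
      have h1 := (hi' i g gd gdd hg).2.2
      have h2 := (hg i).n1 a
      refine (An_mul (ci i) ((hg i).c1 a) (ne_top_of_le_ne_top ENNReal.ofReal_ne_top h1)
        (ne_top_of_le_ne_top hR h2)).trans ?_
      rw [ENNReal.ofReal_mul (hCi i).le, ENNReal.ofReal_toReal hR]
      gcongr
    calc ‖t‖ₑ * An (fun x => ∑ i, fderiv ℝ ψ (z0 + t • g x) (EuclideanSpace.single i (1 : ℝ)) *
        gd a x i) ≤ ‖t‖ₑ * ∑ i, ENNReal.ofReal (Ci i * R.toReal) := by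
          gcongr
          exact hsum.trans (Finset.sum_le_sum fun i _ => hone i)
      _ = ENNReal.ofReal ((∑ i, Ci i * R.toReal) * t) := by
          rw [← ENNReal.ofReal_sum_of_nonneg (fun i _ =>
            mul_nonneg (hCi i).le ENNReal.toReal_nonneg), ENNReal.ofReal_mul hS,
            Real.enorm_of_nonneg ht.le, mul_comm]
      _ ≤ _ := ENNReal.ofReal_le_ofReal (mul_le_mul_of_nonneg_right (by linarith) ht.le)

/-- weight -/
def om (k : KK) : ℝ := 1 + |(k 0 : ℝ)| + |(k 1 : ℝ)|

theorem weighted_cf {f : TT → ℝ} {fd : Fin 2 → TT → ℝ} (hc : Continuous f)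
    (hc1 : ∀ a, Continuous (fd a)) (hd : ∀ a, HasD a f (fd a)) {B : ENNReal} (h0 : An f ≤ B)
    (h1 : ∀ a, An (fd a) ≤ B) : ∑' k, ENNReal.ofReal (om k) * ‖cf f k‖ₑ ≤ 3 * B := by
  have key : ∀ (a : Fin 2) k, ENNReal.ofReal |(k a : ℝ)| * ‖cf f k‖ₑ ≤ ‖cf (fd a) k‖ₑ := by
    intro a k
    rw [cf_HasD hc (hc1 a) (hd a) k, enorm_mul]
    gcongr
    rw [← ofReal_norm]
    apply ENNReal.ofReal_le_ofReal
    simp only [norm_mul, Complex.norm_I, Complex.norm_ofNat, Complex.norm_real, Complex.norm_intCast,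
      Real.norm_eq_abs, abs_of_pos Real.pi_pos]
    have := Real.pi_gt_three
    nlinarith [abs_nonneg (k a : ℝ)]
  calc ∑' k, ENNReal.ofReal (om k) * ‖cf f k‖ₑ
      ≤ ∑' k, (‖cf f k‖ₑ + ‖cf (fd 0) k‖ₑ + ‖cf (fd 1) k‖ₑ) := by
        refine ENNReal.tsum_le_tsum fun k => ?_
        rw [om, ENNReal.ofReal_add (by positivity) (by positivity),
          ENNReal.ofReal_add (by positivity) (by positivity), add_mul, add_mul, ENNReal.ofReal_one,
          one_mul]
        gcongr
        · exact key 0 k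
        · exact key 1 k
    _ = An f + An (fd 0) + An (fd 1) := by
        rw [ENNReal.tsum_add, ENNReal.tsum_add]; rfl
    _ ≤ B + B + B := by gcongr; exacts [h1 0, h1 1]
    _ = 3 * B := by ring

/-- The nonlinear term. -/
noncomputable def hterm {N : ℕ} (J : EE N → EE N →L[ℝ] EE N) (z0 : EE N) (t : ℝ)
    (g g1 : TT → EE N) (j : Fin N) (x : TT) : ℝ := ((J z0 - J (z0 + t • g x)) (g1 x)) j

theorem hterm_strong {N : ℕ} {U : Set (EE N)} (hU : IsOpen U) {z0 : EE N} (hz : z0 ∈ U)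
    {J : EE N → EE N →L[ℝ] EE N} (hJ : ContDiffOn ℝ 3 J U) {R : ENNReal} (hR : R ≠ ⊤) :
    ∃ C : ℝ, 0 < C ∧ ∀ᶠ t in 𝓝[>] (0 : ℝ), ∀ g gd gdd, VW R g gd gdd →
      (∀ x, z0 + t • g x ∈ U) ∧ ∀ j, Continuous (hterm J z0 t g (gd 1) j) ∧
      An (hterm J z0 t g (gd 1) j) ≠ ⊤ ∧
      ∑' k, ENNReal.ofReal (om k) * ‖cf (hterm J z0 t g (gd 1) j) k‖ₑ ≤ ENNReal.ofReal (C * t) := by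
  have hjl : ∀ p : Fin N × Fin N, ContDiffOn ℝ 3
      (fun z => (J z (EuclideanSpace.single p.2 (1 : ℝ))) p.1) U := by
    intro p
    have h1 : ContDiffOn ℝ 3 (fun z => J z (EuclideanSpace.single p.2 (1 : ℝ))) U :=
      hJ.clm_apply contDiffOn_const
    exact (EuclideanSpace.proj p.1 : EE N →L[ℝ] ℝ).contDiff.comp_contDiffOn h1
  choose Cp hCp Hp using fun p => mult_An hU hz (hjl p) hR
  set S : ℝ := ∑ p, Cp p with hS
  have hCS : ∀ p, Cp p ≤ S := fun p =>
    Finset.single_le_sum (f := Cp) (fun q _ => (hCp q).le) (Finset.mem_univ p)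
  have hS0 : 0 ≤ S := Finset.sum_nonneg fun p _ => (hCp p).le
  refine ⟨3 * (N * (2 * S * R.toReal)) + 1, by positivity, ?_⟩
  obtain ⟨C0, hC0, H0⟩ := comp_An hU hz (contDiffOn_const (c := (0 : ℝ))) hR
  filter_upwards [eventually_all.2 Hp, H0, self_mem_nhdsWithin] with t hp h0 ht g gd gdd hg
  have ht : 0 < t := ht
  refine ⟨(h0 g gd gdd hg).1, fun j => ?_⟩
  choose hm md mc mdc mD mA mdA using fun l => hp (j, l) g gd gdd hg
  have hexp : hterm J z0 t g (gd 1) j = fun x => ∑ l,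
      ((J z0 (EuclideanSpace.single l (1 : ℝ))) j -
        (J (z0 + t • g x) (EuclideanSpace.single l (1 : ℝ))) j) * gd 1 x l := by
    funext x
    have h : gd 1 x = ∑ l, gd 1 x l • (EuclideanSpace.single l (1 : ℝ) : EE N) := by
      ext i
      simp [Finset.sum_apply, Pi.single_apply]
    unfold hterm
    conv_lhs => rw [h]
    rw [map_sum]
    simp only [map_smul, WithLp.ofLp_sum, Finset.sum_apply, PiLp.smul_apply, smul_eq_mul,
      sub_apply, PiLp.sub_apply]
    refine Finset.sum_congr rfl fun l _ => mul_comm _ _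
  have hmC : ∀ l, ENNReal.ofReal (Cp (j, l) * t) ≤ ENNReal.ofReal (S * t) := fun l =>
    ENNReal.ofReal_le_ofReal (mul_le_mul_of_nonneg_right (hCS _) ht.le)
  have cpr : ∀ l, Continuous fun x => ((J z0 (EuclideanSpace.single l (1 : ℝ))) j -
        (J (z0 + t • g x) (EuclideanSpace.single l (1 : ℝ))) j) * gd 1 x l := fun l =>
    (mc l).mul ((hg l).c1 1)
  have cdr : ∀ a l, Continuous fun x => md l a x * gd 1 x l +
      ((J z0 (EuclideanSpace.single l (1 : ℝ))) j -
        (J (z0 + t • g x) (EuclideanSpace.single l (1 : ℝ))) j) * gdd 1 a x l := fun a l =>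
    ((mdc l a).mul ((hg l).c1 1)).add ((mc l).mul ((hg l).c2 1 a))
  have ch : Continuous (hterm J z0 t g (gd 1) j) := by
    rw [hexp]
    exact continuous_finsetSum _ fun l _ => cpr l
  have chd : ∀ a, Continuous fun x => ∑ l, (md l a x * gd 1 x l +
      ((J z0 (EuclideanSpace.single l (1 : ℝ))) j -
        (J (z0 + t • g x) (EuclideanSpace.single l (1 : ℝ))) j) * gdd 1 a x l) := fun a =>
    continuous_finsetSum _ fun l _ => cdr a l
  have hD : ∀ a, HasD a (hterm J z0 t g (gd 1) j) (fun x => ∑ l, (md l a x * gd 1 x l +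
      ((J z0 (EuclideanSpace.single l (1 : ℝ))) j -
        (J (z0 + t • g x) (EuclideanSpace.single l (1 : ℝ))) j) * gdd 1 a x l)) := by
    intro a
    rw [hexp]
    exact HasD.sum Finset.univ fun l => (mD l a).mul ((hg l).d2 1 a)
  have pb : ∀ {f f' : TT → ℝ}, Continuous f → Continuous f' → An f ≤ ENNReal.ofReal (S * t) →
      An f' ≤ R → An (fun x => f x * f' x) ≤ ENNReal.ofReal (S * t) * R := by
    intro f f' c c' h h'
    refine (An_mul c c' (ne_top_of_le_ne_top ENNReal.ofReal_ne_top h)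
        (ne_top_of_le_ne_top hR h')).trans ?_
    gcongr
  have hB : (N : ENNReal) * (2 * (ENNReal.ofReal (S * t) * R)) =
      ENNReal.ofReal (N * (2 * S * R.toReal) * t) := by
    rw [show N * (2 * S * R.toReal) * t = N * (2 * ((S * t) * R.toReal)) by ring,
      ENNReal.ofReal_mul (p := (N : ℝ)) (by positivity), ENNReal.ofReal_mul (p := 2) (by positivity),
      ENNReal.ofReal_mul (p := S * t) (by positivity), ENNReal.ofReal_toReal hR]
    simp
  have A0 : An (hterm J z0 t g (gd 1) j) ≤ ENNReal.ofReal (N * (2 * S * R.toReal) * t) := by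
    rw [← hB, hexp]
    refine (An_sum Finset.univ cpr).trans ?_
    refine (Finset.sum_le_sum (g := fun _ => 2 * (ENNReal.ofReal (S * t) * R)) fun l _ =>
      (pb (mc l) ((hg l).c1 1) ((mA l).trans (hmC l)) ((hg l).n1 1)).trans ?_).trans ?_
    · rw [two_mul]; exact le_self_add
    · simp
  have A1 : ∀ a, An (fun x => ∑ l, (md l a x * gd 1 x l +
      ((J z0 (EuclideanSpace.single l (1 : ℝ))) j -
        (J (z0 + t • g x) (EuclideanSpace.single l (1 : ℝ))) j) * gdd 1 a x l)) ≤
      ENNReal.ofReal (N * (2 * S * R.toReal) * t) := by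
    intro a
    rw [← hB]
    refine (An_sum Finset.univ (cdr a)).trans ?_
    refine (Finset.sum_le_sum (g := fun _ => 2 * (ENNReal.ofReal (S * t) * R)) fun l _ =>
      (An_add ((mdc l a).mul ((hg l).c1 1)) ((mc l).mul ((hg l).c2 1 a))).trans ?_).trans ?_
    · rw [two_mul]
      exact add_le_add (pb (mdc l a) ((hg l).c1 1) ((mdA l a).trans (hmC l)) ((hg l).n1 1))
        (pb (mc l) ((hg l).c2 1 a) ((mA l).trans (hmC l)) ((hg l).n2 1 a))
    · simp
  refine ⟨ch, ne_top_of_le_ne_top ENNReal.ofReal_ne_top A0, (weighted_cf ch chd hD A0 A1).trans ?_⟩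
  rw [show (3 : ENNReal) = ENNReal.ofReal 3 by simp, ← ENNReal.ofReal_mul (by norm_num)]
  apply ENNReal.ofReal_le_ofReal
  nlinarith

theorem hterm_lip {N : ℕ} {U : Set (EE N)} (hU : IsOpen U) {z0 : EE N} (hz : z0 ∈ U)
    {J : EE N → EE N →L[ℝ] EE N} (hJ : ContDiffOn ℝ 3 J U) (ρ : ℝ) (hρ : 0 ≤ ρ) :
    ∃ K : ℝ, 0 ≤ K ∧ ∀ᶠ t in 𝓝[>] (0 : ℝ), ∀ w w1 w' w1' : EE N, ‖w‖ ≤ ρ → ‖w1‖ ≤ ρ → ‖w'‖ ≤ ρ →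
      ‖w1'‖ ≤ ρ → ‖(J z0 - J (z0 + t • w)) w1 - (J z0 - J (z0 + t • w')) w1'‖ ≤
        K * t * (‖w - w'‖ + ‖w1 - w1'‖) := by
  obtain ⟨L, s, hs, hL⟩ := ((hJ.contDiffAt (hU.mem_nhds hz)).of_le
    (show (1 : WithTop ℕ∞) ≤ 3 by norm_num)).exists_lipschitzOnWith
  obtain ⟨ε, hε, hball⟩ := Metric.mem_nhds_iff.1 hs
  refine ⟨L * ρ, by positivity, ?_⟩
  have t2 : ∀ᶠ t in 𝓝[>] (0 : ℝ), t < ε / (ρ + 1) := by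
    filter_upwards [Ioo_mem_nhdsGT (show (0 : ℝ) < ε / (ρ + 1) by positivity)] with t ht using ht.2
  filter_upwards [t2, self_mem_nhdsWithin] with t ht2 ht w w1 w' w1' hw hw1 hw' hw1'
  have ht : 0 < t := ht
  have hmem : ∀ w : EE N, ‖w‖ ≤ ρ → z0 + t • w ∈ s := by
    intro w hw
    apply hball
    rw [mem_ball_iff_norm, add_sub_cancel_left, norm_smul, Real.norm_of_nonneg ht.le]
    rw [lt_div_iff₀ (by positivity)] at ht2
    nlinarith
  have l1 : ‖J z0 - J (z0 + t • w)‖ ≤ L * (t * ρ) := by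
    have := hL.norm_sub_le (mem_of_mem_nhds hs) (hmem w hw)
    refine this.trans ?_
    rw [sub_add_cancel_left, norm_neg, norm_smul, Real.norm_of_nonneg ht.le]
    gcongr
  have l2 : ‖J (z0 + t • w') - J (z0 + t • w)‖ ≤ L * (t * ‖w - w'‖) := by
    have := hL.norm_sub_le (hmem w' hw') (hmem w hw)
    refine this.trans_eq ?_
    rw [add_sub_add_left_eq_sub, ← smul_sub, norm_smul, Real.norm_of_nonneg ht.le, norm_sub_rev]
  have e : (J z0 - J (z0 + t • w)) w1 - (J z0 - J (z0 + t • w')) w1' =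
      (J z0 - J (z0 + t • w)) (w1 - w1') + (J (z0 + t • w') - J (z0 + t • w)) w1' := by
    simp only [sub_apply, map_sub]
    abel
  rw [e]
  have m1 := (J z0 - J (z0 + t • w)).le_of_opNorm_le l1 (w1 - w1')
  have m2 := (J (z0 + t • w') - J (z0 + t • w)).le_of_opNorm_le l2 w1'
  have m3 : L * (t * ‖w - w'‖) * ‖w1'‖ ≤ L * (t * ‖w - w'‖) * ρ := by gcongr
  refine (norm_add_le _ _).trans ?_
  nlinarith

end PartF

section PartG

open MeasureTheory UnitAddTorus

theorem fp_exists {ι : Type*} (ω : ι → ℝ) (hω : ∀ i, 1 ≤ ω i) (δ : ℝ)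
    (T : (ι → ℂ) → ι → ℂ)
    (h1 : ∀ c, ∑' i, ENNReal.ofReal (ω i) * ‖c i‖ₑ ≤ ENNReal.ofReal δ →
      ∑' i, ENNReal.ofReal (ω i) * ‖T c i‖ₑ ≤ ENNReal.ofReal δ)
    (h2 : ∀ c c', ∑' i, ENNReal.ofReal (ω i) * ‖c i‖ₑ ≤ ENNReal.ofReal δ →
      ∑' i, ENNReal.ofReal (ω i) * ‖c' i‖ₑ ≤ ENNReal.ofReal δ →
      ∑' i, ‖T c i - T c' i‖ ^ 2 ≤ (1 / 4) * ∑' i, ‖c i - c' i‖ ^ 2) :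
    ∃ c, ∑' i, ENNReal.ofReal (ω i) * ‖c i‖ₑ ≤ ENNReal.ofReal δ ∧ T c = c := by
  have hmem : ∀ c : ι → ℂ, ∑' i, ENNReal.ofReal (ω i) * ‖c i‖ₑ ≤ ENNReal.ofReal δ →
      Memℓp c 2 := by
    intro c hc
    have h3 : ∑' i, ‖c i‖ₑ ≠ ⊤ := by
      refine ne_top_of_le_ne_top ENNReal.ofReal_ne_top (le_trans ?_ hc)
      refine ENNReal.tsum_le_tsum fun i => ?_
      refine le_mul_of_one_le_left zero_le ?_
      rw [ENNReal.one_le_ofReal]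
      exact hω i
    have h4 : Memℓp c 1 := by
      apply memℓp_gen
      simpa using summable_of_tsum_enorm h3
    exact h4.of_exponent_ge (by norm_num)
  let S : Set (lp (fun _ : ι => ℂ) 2) := {c | ∑' i, ENNReal.ofReal (ω i) * ‖c i‖ₑ ≤ ENNReal.ofReal δ}
  have hSc : IsClosed S := by
    have : S = ⋂ F : Finset ι, {c : lp (fun _ : ι => ℂ) 2 |
        ∑ i ∈ F, ENNReal.ofReal (ω i) * ‖c i‖ₑ ≤ ENNReal.ofReal δ} := by
      ext c
      simp only [S, Set.mem_setOf_eq, Set.mem_iInter, ENNReal.tsum_eq_iSup_sum, iSup_le_iff]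
    rw [this]
    refine isClosed_iInter fun F => isClosed_le ?_ continuous_const
    refine continuous_finsetSum _ fun i _ => ?_
    refine (ENNReal.continuous_const_mul ENNReal.ofReal_ne_top).comp ?_
    refine continuous_enorm.comp ?_
    have := (lp.uniformContinuous_coe (E := fun _ : ι => ℂ) (p := 2)).continuous
    exact (continuous_apply i).comp this
  let T' : lp (fun _ : ι => ℂ) 2 → lp (fun _ : ι => ℂ) 2 := fun c => by
    classical
    exact if h : c ∈ S then ⟨T c, hmem _ (h1 c h)⟩ else 0
  have hT' : ∀ c (h : c ∈ S), T' c = ⟨T c, hmem _ (h1 c h)⟩ := fun c h => by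
    simp only [T', dif_pos h]
  have hmaps : Set.MapsTo T' S S := by
    intro c hc
    rw [hT' c hc]
    exact h1 c hc
  have hdist : ∀ c c' : lp (fun _ : ι => ℂ) 2, dist c c' ^ 2 = ∑' i, ‖c i - c' i‖ ^ 2 := by
    intro c c'
    have := lp.norm_rpow_eq_tsum (p := 2) (by norm_num) (c - c')
    simp only [ENNReal.toReal_ofNat, Real.rpow_ofNat] at this
    rw [dist_eq_norm, this]
    rfl
  have hcon : ContractingWith (1 / 2) (hmaps.restrict T' S S) := by
    refine ⟨by rw [← NNReal.coe_lt_coe]; norm_num, ?_⟩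
    refine LipschitzWith.of_dist_le_mul fun c c' => ?_
    have e1 : dist (hmaps.restrict T' S S c) (hmaps.restrict T' S S c') = dist (T' c) (T' c') := rfl
    have e2 : dist c c' = dist (c : lp (fun _ : ι => ℂ) 2) c' := rfl
    rw [e1, e2]
    have h3 := h2 c c' c.2 c'.2
    rw [← hdist] at h3
    have h4 : dist (T' c) (T' c') ^ 2 = ∑' i, ‖T c i - T c' i‖ ^ 2 := by
      rw [hdist, hT' _ c.2, hT' _ c'.2]
    rw [← h4] at h3
    apply le_of_sq_le_sq _ (by positivity)
    simp only [NNReal.coe_div, NNReal.coe_one, NNReal.coe_ofNat]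
    nlinarith
  have hzero : (0 : lp (fun _ : ι => ℂ) 2) ∈ S := by
    simp [S]
  obtain ⟨c, hc, hfix, -⟩ := ContractingWith.exists_fixedPoint' hSc.isComplete hmaps hcon hzero
    (edist_ne_top _ _)
  refine ⟨c, hc, ?_⟩
  have h5 : T' c = c := hfix
  rw [hT' c hc] at h5
  exact congrArg Subtype.val h5

end PartG

section PartH

open MeasureTheory UnitAddTorus

attribute [local instance] instMSUnitAddCircle instHaarUnitAddCircle instProbUnitAddCircle

/-- The Fourier multiplier of `∂_m Δ⁻¹`. -/
noncomputable def mu (m : Fin 2) (k : KK) : ℂ :=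
  -(Complex.I * (k m : ℝ)) / ((2 * Real.pi * ((k 0 : ℝ) ^ 2 + (k 1 : ℝ) ^ 2) : ℝ) : ℂ)

theorem norm_dm (a : Fin 2) (b : KK → ℂ) (k : KK) :
    ‖dm a b k‖ = 2 * Real.pi * |(k a : ℝ)| * ‖b k‖ := by
  simp only [dm, norm_mul, Complex.norm_I, Complex.norm_ofNat, Complex.norm_real,
    Complex.norm_intCast, Real.norm_eq_abs, abs_of_pos Real.pi_pos, mul_one]

theorem norm_mu (m : Fin 2) (k : KK) :
    ‖mu m k‖ = |(k m : ℝ)| / (2 * Real.pi * ((k 0 : ℝ) ^ 2 + (k 1 : ℝ) ^ 2)) := by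
  rw [mu, norm_div, norm_neg, norm_mul, Complex.norm_I, one_mul, Complex.norm_real,
    Complex.norm_real, Real.norm_eq_abs, Real.norm_eq_abs, abs_of_nonneg (a := 2 * Real.pi * _)]
  have := Real.pi_pos
  positivity

theorem sq_coord_le (a : Fin 2) (k : KK) : |(k a : ℝ)| ^ 2 ≤ (k 0 : ℝ) ^ 2 + (k 1 : ℝ) ^ 2 := by
  rw [sq_abs]
  fin_cases a
  · simp; positivity
  · simp; positivity

theorem int_abs_le_sq (n : ℤ) : |(n : ℝ)| ≤ |(n : ℝ)| ^ 2 := by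
  have : |n| ≤ |n| ^ 2 := by
    rcases eq_or_lt_of_le (abs_nonneg n) with h | h
    · rw [← h]; norm_num
    · have : 1 ≤ |n| := h
      nlinarith
  exact_mod_cast this

theorem mu_le (m : Fin 2) (k : KK) : ‖mu m k‖ ≤ 1 := by
  rw [norm_mu]
  have hp := Real.pi_gt_three
  have h1 := sq_coord_le m k
  have h2 := int_abs_le_sq (k m)
  apply div_le_one_of_le₀
  · nlinarith [abs_nonneg (k m : ℝ), sq_nonneg |(k m : ℝ)|]
  · positivity

theorem dm_mu_le (a m : Fin 2) (k : KK) : ‖dm a (mu m) k‖ ≤ 1 := by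
  rw [norm_dm, norm_mu]
  have hp := Real.pi_gt_three
  have h1 := sq_coord_le m k
  have h2 := sq_coord_le a k
  rw [mul_div_assoc']
  apply div_le_one_of_le₀
  · have : |(k a : ℝ)| * |(k m : ℝ)| ≤ (k 0 : ℝ) ^ 2 + (k 1 : ℝ) ^ 2 := by
      nlinarith [sq_nonneg (|(k a : ℝ)| - |(k m : ℝ)|)]
    calc 2 * Real.pi * |(k a : ℝ)| * |(k m : ℝ)| = 2 * Real.pi * (|(k a : ℝ)| * |(k m : ℝ)|) := by ring
      _ ≤ _ := by gcongr
  · positivity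

theorem om_ge_one (k : KK) : 1 ≤ om k := by
  unfold om
  have := abs_nonneg (k 0 : ℝ)
  have := abs_nonneg (k 1 : ℝ)
  linarith

theorem om_ge (k : KK) (a : Fin 2) : |(k a : ℝ)| ≤ om k := by
  unfold om
  have := abs_nonneg (k 0 : ℝ)
  have := abs_nonneg (k 1 : ℝ)
  fin_cases a
  · simp; linarith
  · simp; linarith

theorem dm_dm_mu_le (b a m : Fin 2) (k : KK) : ‖dm b (dm a (mu m)) k‖ ≤ 7 * om k := by
  rw [norm_dm]
  have h1 := dm_mu_le a m k
  have h2 := om_ge k b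
  have hp := Real.pi_lt_d2
  have hp0 := Real.pi_pos
  have h3 : 2 * Real.pi * |(k b : ℝ)| * ‖dm a (mu m) k‖ ≤ 2 * Real.pi * |(k b : ℝ)| * 1 := by gcongr
  nlinarith [abs_nonneg (k b : ℝ), om_ge_one k]

/-- Synthesis with multiplier -/
noncomputable def Sq (q b : KK → ℂ) (x : TT) : ℝ := Syn (fun k => q k * b k) x

theorem dm_mul (a : Fin 2) (q b : KK → ℂ) : dm a (fun k => q k * b k) = fun k => dm a q k * b k := by
  funext k
  simp only [dm]
  ring

theorem sq_tsum {q b : KK → ℂ} (hq : ∀ k, ‖q k‖ ≤ 7 * om k) {Y : ENNReal}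
    (hb : ∑' k, ENNReal.ofReal (om k) * ‖b k‖ₑ ≤ Y) : ∑' k, ‖q k * b k‖ₑ ≤ 7 * Y := by
  calc ∑' k, ‖q k * b k‖ₑ ≤ ∑' k, 7 * (ENNReal.ofReal (om k) * ‖b k‖ₑ) := by
        refine ENNReal.tsum_le_tsum fun k => ?_
        rw [enorm_mul, ← mul_assoc]
        gcongr
        rw [← ofReal_norm]
        refine (ENNReal.ofReal_le_ofReal (hq k)).trans_eq ?_
        rw [ENNReal.ofReal_mul (by norm_num)]
        simp
    _ = 7 * ∑' k, (ENNReal.ofReal (om k) * ‖b k‖ₑ) := ENNReal.tsum_mul_left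
    _ ≤ 7 * Y := by gcongr

theorem sq_summable {q b : KK → ℂ} (hq : ∀ k, ‖q k‖ ≤ 7 * om k) {Y : ENNReal} (hY : Y ≠ ⊤)
    (hb : ∑' k, ENNReal.ofReal (om k) * ‖b k‖ₑ ≤ Y) : Summable fun k => ‖q k * b k‖ :=
  summable_of_tsum_enorm (ne_top_of_le_ne_top (ENNReal.mul_ne_top (by norm_num) hY)
    (sq_tsum hq hb))

theorem one_le7 {q : KK → ℂ} (h : ∀ k, ‖q k‖ ≤ 1) (k : KK) : ‖q k‖ ≤ 7 * om k :=
  (h k).trans (by linarith [om_ge_one k])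

theorem sq_W2 (m : Fin 2) {b : KK → ℂ} {Y : ENNReal} (hY : Y ≠ ⊤)
    (hb : ∑' k, ENNReal.ofReal (om k) * ‖b k‖ₑ ≤ Y) :
    W2 (7 * Y) (Sq (mu m) b) (fun a => Sq (dm a (mu m)) b)
      (fun a a' => Sq (dm a' (dm a (mu m))) b) := by
  have q0 := one_le7 (mu_le m)
  have q1 := fun a => one_le7 (dm_mu_le a m)
  have q2 := fun a' a => dm_dm_mu_le a' a m
  constructor
  · exact syn_continuous (sq_summable q0 hY hb)
  · exact fun a => syn_continuous (sq_summable (q1 a) hY hb)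
  · exact fun a a' => syn_continuous (sq_summable (q2 a' a) hY hb)
  · intro a
    have := syn_hasD a (sq_summable q0 hY hb) (by rw [dm_mul]; exact sq_summable (q1 a) hY hb)
    rw [dm_mul] at this
    exact this
  · intro a a'
    have := syn_hasD a' (sq_summable (q1 a) hY hb)
      (by rw [dm_mul]; exact sq_summable (q2 a' a) hY hb)
    rw [dm_mul] at this
    exact this
  · exact (An_syn (sq_summable q0 hY hb)).trans (sq_tsum q0 hb)
  · exact fun a => (An_syn (sq_summable (q1 a) hY hb)).trans (sq_tsum (q1 a) hb)
  · exact fun a a' => (An_syn (sq_summable (q2 a' a) hY hb)).trans (sq_tsum (q2 a' a) hb)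

/-- vector synthesis -/
noncomputable def SV {N : ℕ} (q : KK → ℂ) (c : Fin N × KK → ℂ) (x : TT) : EE N :=
  WithLp.toLp 2 fun j => Sq q (fun k => c (j, k)) x

/-- real part of the zero mode -/
noncomputable def rc {N : ℕ} (c : Fin N × KK → ℂ) : EE N := WithLp.toLp 2 fun j => (c (j, 0)).re

/-- The perturbed part. -/
noncomputable def pert {N : ℕ} (J0 : EE N →L[ℝ] EE N) (φ0 : TT → ℝ) (q0 q1 : KK → ℂ)
    (c : Fin N × KK → ℂ) (x : TT) : EE N :=
  φ0 x • rc c + SV q0 c x - J0 (SV q1 c x)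

theorem W2_congr {R : ENNReal} {f fd fdd f' fd' fdd'} (h : W2 R f fd fdd) (h0 : ∀ x, f' x = f x)
    (h1 : ∀ a x, fd' a x = fd a x) (h2 : ∀ a b x, fdd' a b x = fdd a b x) : W2 R f' fd' fdd' := by
  have e0 : f' = f := funext h0
  have e1 : fd' = fd := funext fun a => funext (h1 a)
  have e2 : fdd' = fdd := funext fun a => funext fun b => funext (h2 a b)
  rw [e0, e1, e2]
  exact h

theorem clm_comp_apply {N : ℕ} (A : EE N →L[ℝ] EE N) (w : EE N) (j : Fin N) :
    (A w) j = ∑ l, (A (EuclideanSpace.single l (1 : ℝ))) j * w l := by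
  have h : w = ∑ l, w l • (EuclideanSpace.single l (1 : ℝ) : EE N) := by
    ext i
    simp [Finset.sum_apply, Pi.single_apply]
  conv_lhs => rw [h]
  rw [map_sum]
  simp only [map_smul, WithLp.ofLp_sum, Finset.sum_apply, PiLp.smul_apply, smul_eq_mul]
  exact Finset.sum_congr rfl fun l _ => mul_comm _ _

theorem tsum_row {N : ℕ} {c : Fin N × KK → ℂ} {Y : ENNReal}
    (hc : ∑' p, ENNReal.ofReal (om p.2) * ‖c p‖ₑ ≤ Y) (j : Fin N) :
    ∑' k, ENNReal.ofReal (om k) * ‖c (j, k)‖ₑ ≤ Y := by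
  refine le_trans ?_ hc
  rw [ENNReal.tsum_prod', tsum_fintype (L := SummationFilter.unconditional (Fin N))]
  exact Finset.single_le_sum (f := fun j => ∑' k, ENNReal.ofReal (om k) * ‖c (j, k)‖ₑ)
    (fun _ _ => zero_le) (Finset.mem_univ j)

theorem rc_le {b : KK → ℂ} {Y : ENNReal}
    (hb : ∑' k, ENNReal.ofReal (om k) * ‖b k‖ₑ ≤ Y) : ‖(b 0).re‖ₑ ≤ Y := by
  refine le_trans ?_ hb
  refine le_trans ?_ (ENNReal.le_tsum 0)
  have h : ‖(b 0).re‖ₑ ≤ ‖b 0‖ₑ := by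
    rw [← ofReal_norm, ← ofReal_norm]
    exact ENNReal.ofReal_le_ofReal (Complex.abs_re_le_norm _)
  refine h.trans (le_mul_of_one_le_left zero_le ?_)
  rw [ENNReal.one_le_ofReal]
  exact om_ge_one 0

theorem pert_VW {N : ℕ} (J0 : EE N →L[ℝ] EE N) {Rθ : ENNReal} (hRθ : Rθ ≠ ⊤) {θ θd θdd}
    (hθ : W2 Rθ θ θd θdd) : ∃ M : ENNReal, M ≠ ⊤ ∧ ∀ (c : Fin N × KK → ℂ) (Y : ENNReal), Y ≠ ⊤ →
      ∑' p, ENNReal.ofReal (om p.2) * ‖c p‖ₑ ≤ Y →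
      VW (M * Y) (pert J0 θ (mu 0) (mu 1) c)
        (fun a => pert J0 (θd a) (dm a (mu 0)) (dm a (mu 1)) c)
        (fun a b => pert J0 (θdd a b) (dm b (dm a (mu 0))) (dm b (dm a (mu 1))) c) := by
  refine ⟨Rθ + 7 + ∑ j, ∑ l, ‖-(J0 (EuclideanSpace.single l (1 : ℝ))) j‖ₑ * 7, ?_, ?_⟩
  · refine ENNReal.add_ne_top.2 ⟨by simp [hRθ], ?_⟩
    refine ENNReal.sum_ne_top.2 fun j _ => ENNReal.sum_ne_top.2 fun l _ => ?_
    exact ENNReal.mul_ne_top enorm_ne_top (by norm_num)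
  intro c Y hY hc j
  have hr := tsum_row hc
  have h1 := hθ.const_mul (c (j, 0)).re
  have h2 := sq_W2 0 hY (hr j)
  have h3 := fun l => (sq_W2 1 hY (hr l)).const_mul (-(J0 (EuclideanSpace.single l (1 : ℝ))) j)
  have h4 := W2.sum Finset.univ h3
  have h5 := (h1.add h2).add h4
  have e : ∀ (φ : TT → ℝ) (q0 q1 : KK → ℂ) (x : TT), pert J0 φ q0 q1 c x j =
      (c (j, 0)).re * φ x + Sq q0 (fun k => c (j, k)) x +
        ∑ l, -(J0 (EuclideanSpace.single l (1 : ℝ))) j * Sq q1 (fun k => c (l, k)) x := by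
    intro φ q0 q1 x
    simp only [pert, PiLp.sub_apply, PiLp.add_apply, PiLp.smul_apply, smul_eq_mul]
    rw [clm_comp_apply J0 (SV q1 c x)]
    simp only [rc, SV, neg_mul, Finset.sum_neg_distrib]
    ring
  refine (W2_congr h5 (fun x => e _ _ _ x) (fun a x => e _ _ _ x) (fun a b x => e _ _ _ x)).mono ?_
  rw [add_mul, add_mul]
  refine add_le_add (add_le_add ?_ le_rfl) ?_
  · rw [mul_comm]
    exact mul_le_mul_right (rc_le (hr j)) _
  · calc ∑ l, ‖-(J0 (EuclideanSpace.single l (1 : ℝ))) j‖ₑ * (7 * Y)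
        = (∑ l, ‖-(J0 (EuclideanSpace.single l (1 : ℝ))) j‖ₑ * 7) * Y := by
          rw [Finset.sum_mul]
          exact Finset.sum_congr rfl fun l _ => (mul_assoc _ _ _).symm
      _ ≤ _ := by
          refine mul_le_mul_left ?_ _
          exact Finset.single_le_sum (f := fun j =>
            ∑ l, ‖-(J0 (EuclideanSpace.single l (1 : ℝ))) j‖ₑ * 7)
            (fun _ _ => zero_le) (Finset.mem_univ j)

end PartH

section PartI

open MeasureTheory UnitAddTorus

attribute [local instance] instMSUnitAddCircle instHaarUnitAddCircle instProbUnitAddCircle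

theorem prod_tsum {N : ℕ} {f : Fin N × KK → ℝ} (h0 : ∀ p, 0 ≤ f p)
    (h : ∀ j, Summable fun k => f (j, k)) : Summable f ∧ ∑' p, f p = ∑ j, ∑' k, f (j, k) := by
  have hs : Summable f := (summable_prod_of_nonneg h0).2 ⟨h, (hasSum_fintype _).summable⟩
  refine ⟨hs, ?_⟩
  rw [hs.tsum_prod, tsum_fintype (L := SummationFilter.unconditional (Fin N))]

theorem row_summable {N : ℕ} {c : Fin N × KK → ℂ} {Y : ENNReal} (hY : Y ≠ ⊤)
    (hc : ∑' p, ENNReal.ofReal (om p.2) * ‖c p‖ₑ ≤ Y) {q : KK → ℂ} (hq : ∀ k, ‖q k‖ ≤ 1)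
    (j : Fin N) : Summable fun k => ‖q k * c (j, k)‖ :=
  sq_summable (one_le7 hq) hY (tsum_row hc j)

theorem diff_summable {N : ℕ} {c c' : Fin N × KK → ℂ} {Y : ENNReal} (hY : Y ≠ ⊤)
    (hc : ∑' p, ENNReal.ofReal (om p.2) * ‖c p‖ₑ ≤ Y)
    (hc' : ∑' p, ENNReal.ofReal (om p.2) * ‖c' p‖ₑ ≤ Y) (j : Fin N) :
    Summable fun k => ‖c (j, k) - c' (j, k)‖ := by
  have h1 := row_summable hY hc (q := fun _ => 1) (by simp) j
  have h2 := row_summable hY hc' (q := fun _ => 1) (by simp) j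
  simp only [one_mul] at h1 h2
  exact Summable.of_nonneg_of_le (fun _ => norm_nonneg _) (fun k => norm_sub_le _ _) (h1.add h2)

theorem SV_cont {N : ℕ} {c : Fin N × KK → ℂ} {Y : ENNReal} (hY : Y ≠ ⊤)
    (hc : ∑' p, ENNReal.ofReal (om p.2) * ‖c p‖ₑ ≤ Y) {q : KK → ℂ} (hq : ∀ k, ‖q k‖ ≤ 1) :
    Continuous (SV q c) := ee_cont fun j => syn_continuous (row_summable hY hc hq j)

theorem SV_l2 {N : ℕ} {c c' : Fin N × KK → ℂ} {Y : ENNReal} (hY : Y ≠ ⊤)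
    (hc : ∑' p, ENNReal.ofReal (om p.2) * ‖c p‖ₑ ≤ Y)
    (hc' : ∑' p, ENNReal.ofReal (om p.2) * ‖c' p‖ₑ ≤ Y) {q : KK → ℂ} (hq : ∀ k, ‖q k‖ ≤ 1) :
    ∫ x, ‖SV q c x - SV q c' x‖ ^ 2 ≤ ∑' p, ‖c p - c' p‖ ^ 2 := by
  have hd := diff_summable hY hc hc'
  rw [(prod_tsum (f := fun p => ‖c p - c' p‖ ^ 2) (fun _ => by positivity)
    (fun j => (syn_l2 (hd j)).1)).2]
  have e : ∀ x, ‖SV q c x - SV q c' x‖ ^ 2 =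
      ∑ j, (Syn (fun k => q k * c (j, k) - q k * c' (j, k)) x) ^ 2 := by
    intro x
    rw [EuclideanSpace.norm_sq_eq]
    refine Finset.sum_congr rfl fun j _ => ?_
    rw [syn_sub (row_summable hY hc hq j) (row_summable hY hc' hq j), Real.norm_eq_abs, sq_abs]
    rfl
  simp only [e]
  have hs : ∀ j, Summable fun k => ‖q k * c (j, k) - q k * c' (j, k)‖ := fun j =>
    Summable.of_nonneg_of_le (fun _ => norm_nonneg _) (fun k => norm_sub_le _ _)
      ((row_summable hY hc hq j).add (row_summable hY hc' hq j))
  have hi : ∀ j, Integrable (fun x : TT => Syn (fun k => q k * c (j, k) - q k * c' (j, k)) x ^ 2) :=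
    fun j => tint ((syn_continuous (hs j)).pow 2)
  rw [integral_finsetSum _ fun j _ => hi j]
  refine Finset.sum_le_sum fun j _ => ?_
  refine (syn_l2 (hs j)).2.trans ?_
  refine (syn_l2 (hs j)).1.tsum_le_tsum (fun k => ?_) (syn_l2 (hd j)).1
  rw [← mul_sub, norm_mul, mul_pow]
  exact mul_le_of_le_one_left (by positivity) (pow_le_one₀ (norm_nonneg _) (hq k))

theorem pert_l2 {N : ℕ} (J0 : EE N →L[ℝ] EE N) {φ : TT → ℝ} {S : ℝ}
    (hφS : ∀ x, |φ x| ≤ S) {q0 q1 : KK → ℂ} (hq0 : ∀ k, ‖q0 k‖ ≤ 1) (hq1 : ∀ k, ‖q1 k‖ ≤ 1)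
    {c c' : Fin N × KK → ℂ} {Y : ENNReal} (hY : Y ≠ ⊤) (hφ : Continuous φ)
    (hc : ∑' p, ENNReal.ofReal (om p.2) * ‖c p‖ₑ ≤ Y)
    (hc' : ∑' p, ENNReal.ofReal (om p.2) * ‖c' p‖ₑ ≤ Y) :
    ∫ x, ‖pert J0 φ q0 q1 c x - pert J0 φ q0 q1 c' x‖ ^ 2 ≤
      3 * (S ^ 2 + 1 + ‖J0‖ ^ 2) * ∑' p, ‖c p - c' p‖ ^ 2 := by
  set V := ∑' p, ‖c p - c' p‖ ^ 2 with hV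
  have hd := diff_summable hY hc hc'
  have hVs := (prod_tsum (f := fun p => ‖c p - c' p‖ ^ 2) (fun _ => by positivity)
    (fun j => (syn_l2 (hd j)).1))
  have hrc : ‖rc c - rc c'‖ ^ 2 ≤ V := by
    rw [EuclideanSpace.norm_sq_eq, hV, hVs.2]
    refine Finset.sum_le_sum fun j _ => ?_
    refine le_trans ?_ ((syn_l2 (hd j)).1.le_tsum 0 fun _ _ => by positivity)
    have : (rc c - rc c') j = (c (j, 0) - c' (j, 0)).re := rfl
    rw [this]
    exact pow_le_pow_left₀ (norm_nonneg _) (Complex.abs_re_le_norm _) 2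
  have c0 := SV_cont hY hc hq0
  have c0' := SV_cont hY hc' hq0
  have c1 := SV_cont hY hc hq1
  have c1' := SV_cont hY hc' hq1
  have l0 := SV_l2 hY hc hc' hq0
  have l1 := SV_l2 hY hc hc' hq1
  have pt : ∀ x, ‖pert J0 φ q0 q1 c x - pert J0 φ q0 q1 c' x‖ ^ 2 ≤
      3 * S ^ 2 * V + 3 * ‖SV q0 c x - SV q0 c' x‖ ^ 2 +
        3 * ‖J0‖ ^ 2 * ‖SV q1 c x - SV q1 c' x‖ ^ 2 := by
    intro x
    have e : pert J0 φ q0 q1 c x - pert J0 φ q0 q1 c' x = φ x • (rc c - rc c') +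
        (SV q0 c x - SV q0 c' x) - J0 (SV q1 c x - SV q1 c' x) := by
      simp only [pert, map_sub, smul_sub]
      abel
    have n1 : ‖φ x • (rc c - rc c')‖ ≤ S * ‖rc c - rc c'‖ := by
      rw [norm_smul]
      exact mul_le_mul_of_nonneg_right (hφS x) (norm_nonneg _)
    have n2 := J0.le_opNorm (SV q1 c x - SV q1 c' x)
    have n3 : ‖pert J0 φ q0 q1 c x - pert J0 φ q0 q1 c' x‖ ≤ S * ‖rc c - rc c'‖ +
        ‖SV q0 c x - SV q0 c' x‖ + ‖J0‖ * ‖SV q1 c x - SV q1 c' x‖ := by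
      rw [e]
      refine (norm_sub_le _ _).trans (add_le_add ((norm_add_le _ _).trans ?_) n2)
      exact add_le_add n1 le_rfl
    have n4 := pow_le_pow_left₀ (norm_nonneg _) n3 2
    have n5 : S ^ 2 * ‖rc c - rc c'‖ ^ 2 ≤ S ^ 2 * V := by gcongr
    set a := S * ‖rc c - rc c'‖
    set b := ‖SV q0 c x - SV q0 c' x‖
    set d := ‖J0‖ * ‖SV q1 c x - SV q1 c' x‖ with hdd
    have ha : a ^ 2 ≤ S ^ 2 * V := by rw [mul_pow]; exact n5
    have hd2 : ‖J0‖ ^ 2 * ‖SV q1 c x - SV q1 c' x‖ ^ 2 = d ^ 2 := by rw [hdd, mul_pow]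
    rw [mul_assoc 3 (‖J0‖ ^ 2), hd2]
    nlinarith [sq_nonneg (a - b), sq_nonneg (a - d), sq_nonneg (b - d)]
  have i0 : Integrable fun x => 3 * ‖SV q0 c x - SV q0 c' x‖ ^ 2 :=
    tint (continuous_const.mul ((c0.sub c0').norm.pow 2))
  have i1 : Integrable fun x => 3 * ‖J0‖ ^ 2 * ‖SV q1 c x - SV q1 c' x‖ ^ 2 :=
    tint (continuous_const.mul ((c1.sub c1').norm.pow 2))
  have cp : ∀ {c : Fin N × KK → ℂ}, Continuous (SV q0 c) → Continuous (SV q1 c) →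
      Continuous (pert J0 φ q0 q1 c) := by
    intro c h h'
    exact ((hφ.smul continuous_const).add h).sub (J0.continuous.comp h')
  have ic : Integrable (fun _ : TT => 3 * S ^ 2 * V) := tint continuous_const
  have i01 : Integrable (fun x : TT => 3 * S ^ 2 * V + 3 * ‖SV q0 c x - SV q0 c' x‖ ^ 2) :=
    ic.add i0
  have l0V : ∫ x, ‖SV q0 c x - SV q0 c' x‖ ^ 2 ≤ V := l0
  have l1V : ∫ x, ‖SV q1 c x - SV q1 c' x‖ ^ 2 ≤ V := l1
  calc ∫ x, ‖pert J0 φ q0 q1 c x - pert J0 φ q0 q1 c' x‖ ^ 2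
      ≤ ∫ x, (3 * S ^ 2 * V + 3 * ‖SV q0 c x - SV q0 c' x‖ ^ 2 +
        3 * ‖J0‖ ^ 2 * ‖SV q1 c x - SV q1 c' x‖ ^ 2) :=
        integral_mono (tint (((cp c0 c1).sub (cp c0' c1')).norm.pow 2))
          (((tint continuous_const).add i0).add i1) pt
    _ = 3 * S ^ 2 * V + 3 * (∫ x, ‖SV q0 c x - SV q0 c' x‖ ^ 2) +
        3 * ‖J0‖ ^ 2 * (∫ x, ‖SV q1 c x - SV q1 c' x‖ ^ 2) := by
        rw [integral_add i01 i1, integral_add ic i0, integral_const_mul, integral_const_mul,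
          integral_const]
        simp only [probReal_univ, one_smul]
        rw [integral_const_mul]
    _ ≤ 3 * S ^ 2 * V + 3 * V + 3 * ‖J0‖ ^ 2 * V :=
        add_le_add (add_le_add le_rfl (mul_le_mul_of_nonneg_left l0V (by norm_num)))
          (mul_le_mul_of_nonneg_left l1V (by positivity))
    _ = _ := by ring

end PartI

section PartJ

open MeasureTheory UnitAddTorus

attribute [local instance] instMSUnitAddCircle instHaarUnitAddCircle instProbUnitAddCircle

/-- The full ansatz. -/
noncomputable def gg {N : ℕ} (J0 : EE N →L[ℝ] EE N) (v : EE N) (φ0 φ1 : TT → ℝ) (q0 q1 : KK → ℂ)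
    (c : Fin N × KK → ℂ) (x : TT) : EE N :=
  φ0 x • v + φ1 x • J0 v + pert J0 φ0 q0 q1 c x

theorem gg_VW {N : ℕ} (J0 : EE N →L[ℝ] EE N) (v : EE N) {Rθ : ENNReal} (hRθ : Rθ ≠ ⊤)
    {θ : Fin 2 → TT → ℝ} {θd : Fin 2 → Fin 2 → TT → ℝ} {θdd : Fin 2 → Fin 2 → Fin 2 → TT → ℝ}
    (hθ : ∀ a, W2 Rθ (θ a) (θd a) (θdd a)) :
    ∃ Rp : ENNReal, Rp ≠ ⊤ ∧ ∀ (c : Fin N × KK → ℂ) (Y : ENNReal),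
      VW Y (pert J0 (θ 0) (mu 0) (mu 1) c)
        (fun a => pert J0 (θd 0 a) (dm a (mu 0)) (dm a (mu 1)) c)
        (fun a b => pert J0 (θdd 0 a b) (dm b (dm a (mu 0))) (dm b (dm a (mu 1))) c) →
      VW (Rp + Y) (gg J0 v (θ 0) (θ 1) (mu 0) (mu 1) c)
        (fun a => gg J0 v (θd 0 a) (θd 1 a) (dm a (mu 0)) (dm a (mu 1)) c)
        (fun a b => gg J0 v (θdd 0 a b) (θdd 1 a b) (dm b (dm a (mu 0))) (dm b (dm a (mu 1))) c) := by
  refine ⟨∑ j, (‖v j‖ₑ * Rθ + ‖(J0 v) j‖ₑ * Rθ), ?_, ?_⟩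
  · refine ENNReal.sum_ne_top.2 fun j _ => ENNReal.add_ne_top.2 ⟨?_, ?_⟩
    · exact ENNReal.mul_ne_top enorm_ne_top hRθ
    · exact ENNReal.mul_ne_top enorm_ne_top hRθ
  intro c Y h j
  have h1 := (((hθ 0).const_mul (v j)).add ((hθ 1).const_mul ((J0 v) j))).add (h j)
  have e : ∀ (φ0 φ1 : TT → ℝ) (q0 q1 : KK → ℂ) (x : TT), gg J0 v φ0 φ1 q0 q1 c x j =
      v j * φ0 x + (J0 v) j * φ1 x + pert J0 φ0 q0 q1 c x j := by
    intro φ0 φ1 q0 q1 x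
    simp only [gg, PiLp.add_apply, PiLp.smul_apply, smul_eq_mul]
    ring
  refine (W2_congr h1 (fun x => e _ _ _ _ x) (fun a x => e _ _ _ _ x)
    (fun a b x => e _ _ _ _ x)).mono ?_
  refine add_le_add ?_ le_rfl
  exact Finset.single_le_sum (f := fun j => ‖v j‖ₑ * Rθ + ‖(J0 v) j‖ₑ * Rθ)
            (fun _ _ => zero_le) (Finset.mem_univ j)

theorem dm_mu_comm (k : KK) : dm 1 (mu 0) k = dm 0 (mu 1) k := by
  simp only [dm, mu]
  push_cast
  ring

theorem dm_mu_sum (k : KK) (hk : k ≠ 0) : dm 0 (mu 0) k + dm 1 (mu 1) k = 1 := by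
  have hpi : (Real.pi : ℂ) ≠ 0 := by exact_mod_cast Real.pi_ne_zero
  have h : (k 0 : ℝ) ^ 2 + (k 1 : ℝ) ^ 2 ≠ 0 := by
    intro h
    apply hk
    have h0 : (k 0 : ℝ) = 0 := by nlinarith [sq_nonneg (k 0 : ℝ), sq_nonneg (k 1 : ℝ)]
    have h1 : (k 1 : ℝ) = 0 := by nlinarith [sq_nonneg (k 0 : ℝ), sq_nonneg (k 1 : ℝ)]
    funext i
    fin_cases i
    · exact_mod_cast h0
    · exact_mod_cast h1
  have h' : (k 0 : ℂ) ^ 2 + (k 1 : ℂ) ^ 2 ≠ 0 := by exact_mod_cast h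
  simp only [dm, mu]
  push_cast
  field_simp
  linear_combination (-((k 0 : ℂ) ^ 2 + (k 1 : ℂ) ^ 2)) * Complex.I_sq

theorem dm_mu_zero (a m : Fin 2) : dm a (mu m) 0 = 0 := by
  simp [dm]

theorem syn_zero_mode {b : KK → ℂ} {Y : ENNReal} (hY : Y ≠ ⊤)
    (hb : ∑' k, ENNReal.ofReal (om k) * ‖b k‖ₑ ≤ Y) (x : TT) :
    (b 0).re + Sq (dm 0 (mu 0)) b x + Sq (dm 1 (mu 1)) b x = Syn b x := by
  have s0 := syn_summable (sq_summable (one_le7 (dm_mu_le 0 0)) hY hb) x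
  have s1 := syn_summable (sq_summable (one_le7 (dm_mu_le 1 1)) hY hb) x
  have h1 := (hasSum_ite_eq (0 : KK) (b 0)).add (s0.hasSum.add s1.hasSum)
  have h2 : (fun k : KK => b k * mFourier k x) = fun k => (if k = 0 then b 0 else 0) +
      (dm 0 (mu 0) k * b k * mFourier k x + dm 1 (mu 1) k * b k * mFourier k x) := by
    funext k
    by_cases hk : k = 0
    · subst hk
      simp [dm_mu_zero, mFourier]
    · rw [if_neg hk, ← add_mul, ← add_mul, dm_mu_sum k hk]
      simp
  simp only [Sq, Syn]
  rw [h2, h1.tsum_eq]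
  simp [add_assoc]

theorem gg_eqn {N : ℕ} {J0 : EE N →L[ℝ] EE N} (hsq : ∀ w, J0 (J0 w) = -w) (v : EE N)
    {φ00 φ01 φ10 φ11 : TT → ℝ} {c : Fin N × KK → ℂ} {Y : ENNReal} (hY : Y ≠ ⊤)
    (hc : ∑' p, ENNReal.ofReal (om p.2) * ‖c p‖ₑ ≤ Y) (x : TT) (h00 : φ00 x = 1) (h01 : φ01 x = 0)
    (h10 : φ10 x = 0) (h11 : φ11 x = 1) :
    gg J0 v φ00 φ10 (dm 0 (mu 0)) (dm 0 (mu 1)) c x +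
      J0 (gg J0 v φ01 φ11 (dm 1 (mu 0)) (dm 1 (mu 1)) c x) =
      WithLp.toLp 2 fun j => Syn (fun k => c (j, k)) x := by
  have e1 : gg J0 v φ00 φ10 (dm 0 (mu 0)) (dm 0 (mu 1)) c x +
      J0 (gg J0 v φ01 φ11 (dm 1 (mu 0)) (dm 1 (mu 1)) c x) =
      rc c + SV (dm 0 (mu 0)) c x + SV (dm 1 (mu 1)) c x := by
    have ec : dm 1 (mu 0) = dm 0 (mu 1) := funext dm_mu_comm
    simp only [gg, pert, h00, h01, h10, h11, one_smul, zero_smul, map_add, map_sub, hsq, ec,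
      map_zero]
    abel
  rw [e1]
  ext j
  exact syn_zero_mode hY (tsum_row hc j) x

theorem gg_l2 {N : ℕ} (J0 : EE N →L[ℝ] EE N) (v : EE N) {φ φ' : TT → ℝ} {S : ℝ}
    (hφS : ∀ x, |φ x| ≤ S) {q0 q1 : KK → ℂ} (hq0 : ∀ k, ‖q0 k‖ ≤ 1) (hq1 : ∀ k, ‖q1 k‖ ≤ 1)
    {c c' : Fin N × KK → ℂ} {Y : ENNReal} (hY : Y ≠ ⊤) (hφ : Continuous φ)
    (hc : ∑' p, ENNReal.ofReal (om p.2) * ‖c p‖ₑ ≤ Y)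
    (hc' : ∑' p, ENNReal.ofReal (om p.2) * ‖c' p‖ₑ ≤ Y) :
    ∫ x, ‖gg J0 v φ φ' q0 q1 c x - gg J0 v φ φ' q0 q1 c' x‖ ^ 2 ≤
      3 * (S ^ 2 + 1 + ‖J0‖ ^ 2) * ∑' p, ‖c p - c' p‖ ^ 2 := by
  have := pert_l2 J0 hφS hq0 hq1 hY hφ hc hc'
  simpa only [gg, add_sub_add_left_eq_sub] using this

theorem T_contr {N : ℕ} {h h' : Fin N → TT → ℝ} (hh : ∀ j, Continuous (h j))
    (hh' : ∀ j, Continuous (h' j)) {B : ℝ} (hB : ∀ j, ∫ x, (h j x - h' j x) ^ 2 ≤ B) :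
    ∑' p : Fin N × KK, ‖cf (h p.1) p.2 - cf (h' p.1) p.2‖ ^ 2 ≤ N * B := by
  have hp : ∀ j, HasSum (fun k => ‖cf (h j) k - cf (h' j) k‖ ^ 2) (∫ x, (h j x - h' j x) ^ 2) := by
    intro j
    have := parseval ((hh j).sub (hh' j))
    simp only [← cf_sub (hh j) (hh' j)]
    exact this
  rw [(prod_tsum (f := fun p : Fin N × KK => ‖cf (h p.1) p.2 - cf (h' p.1) p.2‖ ^ 2)
    (fun _ => by positivity) (fun j => (hp j).summable)).2]
  calc _ ≤ ∑ j : Fin N, B := Finset.sum_le_sum fun j _ => by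
        rw [(hp j).tsum_eq]
        exact hB j
    _ = N * B := by simp

end PartJ

section PartK

open MeasureTheory UnitAddTorus

attribute [local instance] instMSUnitAddCircle instHaarUnitAddCircle instProbUnitAddCircle

/-- points of the torus close to the origin -/
def Good (x : TT) : Prop := ∀ a, ∃ s : ℝ, |s| < 1 / 6 ∧ x a = (s : UnitAddCircle)

theorem disc_torus {N : ℕ} {U : Set (EE N)} (hU : IsOpen U) {z0 : EE N} (hz : z0 ∈ U)
    {J : EE N → EE N →L[ℝ] EE N} (hJ : ContDiffOn ℝ 3 J U) (hsq : ∀ w, J z0 (J z0 w) = -w)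
    (v : EE N) : ∃ R M : ENNReal, R ≠ ⊤ ∧ M ≠ ⊤ ∧ ∀ δ : ℝ, 0 < δ → δ ≤ 1 →
      ∀ᶠ t in 𝓝[>] (0 : ℝ), ∃ g gd gdd, VW R g gd gdd ∧ (∀ x, z0 + t • g x ∈ U) ∧
        (∀ x, Good x → gd 0 x + J z0 (gd 1 x) = (J z0 - J (z0 + t • g x)) (gd 1 x)) ∧
        ‖gd 0 0 - v‖ ≤ N * (M * ENNReal.ofReal δ).toReal := by
  obtain ⟨Rθ, θ, θd, θdd, hRθ, hθ, hθ0, hθ1⟩ := theta_exists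
  obtain ⟨M, hM, HM⟩ := pert_VW (J z0) hRθ (hθ 0)
  obtain ⟨Rp, hRp, HRp⟩ := gg_VW (J z0) v hRθ hθ
  have hR : Rp + M ≠ ⊤ := ENNReal.add_ne_top.2 ⟨hRp, hM⟩
  refine ⟨Rp + M, M, hR, hM, ?_⟩
  intro δ hδ hδ1
  obtain ⟨C, hC, HC⟩ := hterm_strong hU hz hJ hR
  obtain ⟨K, hK, HK⟩ := hterm_lip hU hz hJ (N * (Rp + M).toReal) (by positivity)
  set A : ℝ := 3 * (Rθ.toReal ^ 2 + 1 + ‖J z0‖ ^ 2) with hA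
  have t1 : ∀ᶠ t in 𝓝[>] (0 : ℝ), N * (C * t) < δ := by
    have : Tendsto (fun t : ℝ => N * (C * t)) (𝓝 0) (𝓝 (N * (C * 0))) :=
      Continuous.tendsto (by fun_prop) 0
    exact nhdsWithin_le_nhds (this.eventually_lt_const (by simpa using hδ))
  have t2 : ∀ᶠ t in 𝓝[>] (0 : ℝ), N * (2 * (K * t) ^ 2 * (A + A)) < 1 / 4 := by
    have : Tendsto (fun t : ℝ => N * (2 * (K * t) ^ 2 * (A + A))) (𝓝 0)
      (𝓝 (N * (2 * (K * 0) ^ 2 * (A + A)))) := Continuous.tendsto (by fun_prop) 0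
    exact nhdsWithin_le_nhds (this.eventually_lt_const (by simp))
  filter_upwards [HC, HK, t1, t2, self_mem_nhdsWithin] with t hCt hKt ht1 ht2 ht
  have ht : 0 < t := ht
  have hYδ : ENNReal.ofReal δ ≠ ⊤ := ENNReal.ofReal_ne_top
  set G : (Fin N × KK → ℂ) → TT → EE N := fun c => gg (J z0) v (θ 0) (θ 1) (mu 0) (mu 1) c with hG
  set Gd : (Fin N × KK → ℂ) → Fin 2 → TT → EE N := fun c a =>
    gg (J z0) v (θd 0 a) (θd 1 a) (dm a (mu 0)) (dm a (mu 1)) c with hGd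
  set Gdd : (Fin N × KK → ℂ) → Fin 2 → Fin 2 → TT → EE N := fun c a b =>
    gg (J z0) v (θdd 0 a b) (θdd 1 a b) (dm b (dm a (mu 0))) (dm b (dm a (mu 1))) c with hGdd
  have hVW : ∀ c, ∑' p, ENNReal.ofReal (om p.2) * ‖c p‖ₑ ≤ ENNReal.ofReal δ →
      VW (Rp + M) (G c) (Gd c) (Gdd c) := by
    intro c hc j
    refine (HRp c _ (HM c _ hYδ hc) j).mono ?_
    refine add_le_add le_rfl ?_
    refine mul_le_of_le_one_right zero_le ?_
    rw [← ENNReal.ofReal_one]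
    exact ENNReal.ofReal_le_ofReal hδ1
  obtain ⟨c, hc, hfix⟩ := fp_exists (ι := Fin N × KK) (fun p => om p.2) (fun p => om_ge_one p.2) δ
    (fun c p => cf (hterm J z0 t (G c) (Gd c 1) p.1) p.2) (by
      intro c hc
      rw [ENNReal.tsum_prod', tsum_fintype (L := SummationFilter.unconditional (Fin N))]
      have h := fun j => ((hCt _ _ _ (hVW c hc)).2 j).2.2
      refine (Finset.sum_le_sum fun j _ => h j).trans ?_
      rw [Finset.sum_const, Finset.card_univ, Fintype.card_fin, nsmul_eq_mul,
        ← ENNReal.ofReal_natCast, ← ENNReal.ofReal_mul (by positivity)]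
      exact ENNReal.ofReal_le_ofReal ht1.le) (by
      intro c c' hc hc'
      have hV := hVW c hc
      have hV' := hVW c' hc'
      have k := fun j => ((hCt _ _ _ hV).2 j).1
      have k' := fun j => ((hCt _ _ _ hV').2 j).1
      set V := ∑' i, ‖c i - c' i‖ ^ 2 with hVd
      have hV0 : 0 ≤ V := tsum_nonneg fun _ => by positivity
      have sup : ∀ {f : TT → ℝ}, Continuous f → An f ≤ Rθ → ∀ x, |f x| ≤ Rθ.toReal :=
        fun hf h x => (An_sup hf (ne_top_of_le_ne_top hRθ h) x).trans (ENNReal.toReal_mono hRθ h)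
      have l0 : ∫ x, ‖G c x - G c' x‖ ^ 2 ≤ A * V :=
        gg_l2 (J z0) v (sup (hθ 0).c0 (hθ 0).n0) (mu_le 0) (mu_le 1) hYδ (hθ 0).c0 hc hc'
      have l1 : ∫ x, ‖Gd c 1 x - Gd c' 1 x‖ ^ 2 ≤ A * V :=
        gg_l2 (J z0) v (sup ((hθ 0).c1 1) ((hθ 0).n1 1)) (dm_mu_le 1 0) (dm_mu_le 1 1) hYδ
          ((hθ 0).c1 1) hc hc'
      have i0 : Integrable fun x => ‖G c x - G c' x‖ ^ 2 := tint ((hV.c0.sub hV'.c0).norm.pow 2)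
      have i1 : Integrable fun x => ‖Gd c 1 x - Gd c' 1 x‖ ^ 2 :=
        tint (((hV.c1 1).sub (hV'.c1 1)).norm.pow 2)
      have i2 : Integrable fun x => 2 * (K * t) ^ 2 *
          (‖G c x - G c' x‖ ^ 2 + ‖Gd c 1 x - Gd c' 1 x‖ ^ 2) := (i0.add i1).const_mul _
      have i3 : ∀ j, Integrable fun x => (hterm J z0 t (G c) (Gd c 1) j x -
          hterm J z0 t (G c') (Gd c' 1) j x) ^ 2 := fun j => tint (((k j).sub (k' j)).pow 2)
      have hB : ∀ j, ∫ x, (hterm J z0 t (G c) (Gd c 1) j x - hterm J z0 t (G c') (Gd c' 1) j x) ^ 2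
          ≤ 2 * (K * t) ^ 2 * (A + A) * V := by
        intro j
        calc _ ≤ ∫ x, 2 * (K * t) ^ 2 *
              (‖G c x - G c' x‖ ^ 2 + ‖Gd c 1 x - Gd c' 1 x‖ ^ 2) := by
              refine integral_mono (i3 j) i2 fun x => ?_
              have p1 := hKt (G c x) (Gd c 1 x) (G c' x) (Gd c' 1 x) (hV.b0 hR x) (hV.b1 hR 1 x)
                (hV'.b0 hR x) (hV'.b1 hR 1 x)
              have p2 : |hterm J z0 t (G c) (Gd c 1) j x - hterm J z0 t (G c') (Gd c' 1) j x| ≤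
                  K * t * (‖G c x - G c' x‖ + ‖Gd c 1 x - Gd c' 1 x‖) :=
                (PiLp.norm_apply_le ((J z0 - J (z0 + t • G c x)) (Gd c 1 x) -
                  (J z0 - J (z0 + t • G c' x)) (Gd c' 1 x)) j).trans p1
              have p3 := pow_le_pow_left₀ (abs_nonneg _) p2 2
              rw [sq_abs] at p3
              refine p3.trans ?_
              rw [mul_pow]
              nlinarith [mul_nonneg (sq_nonneg (K * t))
                (sq_nonneg (‖G c x - G c' x‖ - ‖Gd c 1 x - Gd c' 1 x‖))]
          _ = 2 * (K * t) ^ 2 * ((∫ x, ‖G c x - G c' x‖ ^ 2) +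
                (∫ x, ‖Gd c 1 x - Gd c' 1 x‖ ^ 2)) := by
              rw [integral_const_mul, integral_add i0 i1]
          _ ≤ 2 * (K * t) ^ 2 * (A * V + A * V) :=
              mul_le_mul_of_nonneg_left (add_le_add l0 l1) (by positivity)
          _ = _ := by ring
      refine (T_contr k k' hB).trans ?_
      rw [← mul_assoc]
      exact mul_le_mul_of_nonneg_right ht2.le hV0)
  have hV := hVW c hc
  have hh := hCt _ _ _ hV
  refine ⟨G c, Gd c, Gdd c, hV, hh.1, ?_, ?_⟩
  · intro x hx
    obtain ⟨s0, hs0, hx0⟩ := hx 0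
    obtain ⟨s1, hs1, hx1⟩ := hx 1
    have e := gg_eqn hsq v hYδ hc x (φ00 := θd 0 0) (φ01 := θd 0 1) (φ10 := θd 1 0)
      (φ11 := θd 1 1) (hθ1 0 x s0 hs0 hx0) (hθ0 0 1 (by decide) x) (hθ0 1 0 (by decide) x)
      (hθ1 1 x s1 hs1 hx1)
    refine e.trans ?_
    ext j
    have hs := An_hasSum (hh.2 j).1 (hh.2 j).2.1 x
    have hcj : ∀ k, cf (hterm J z0 t (G c) (Gd c 1) j) k = c (j, k) := fun k => congrFun hfix (j, k)
    simp only [hcj] at hs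
    show Syn (fun k => c (j, k)) x = hterm J z0 t (G c) (Gd c 1) j x
    rw [Syn, hs.tsum_eq, Complex.ofReal_re]
  · have hP := HM c _ hYδ hc
    have hb := hP.b1 (ENNReal.mul_ne_top hM hYδ) 0 0
    have h1 : θd 0 0 0 = 1 := hθ1 0 0 0 (by norm_num) (by simp)
    have h0 : θd 1 0 0 = 0 := hθ0 1 0 (by decide) 0
    have e : Gd c 0 0 - v = pert (J z0) (θd 0 0) (dm 0 (mu 0)) (dm 0 (mu 1)) c 0 := by
      simp only [hGd, gg, h1, h0, one_smul, zero_smul]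
      abel
    rw [e]
    exact hb

end PartK

section PartL

/-- The covering map. -/
noncomputable def PP (ζ : ℂ) : TT := tshift 0 ζ.re + tshift 1 ζ.im

theorem PP_cont : Continuous PP :=
  ((continuous_tshift 0).comp Complex.continuous_re).add
    ((continuous_tshift 1).comp Complex.continuous_im)

theorem PP_re (ζ : ℂ) (s : ℝ) : PP (ζ + s) = PP ζ + tshift 0 s := by
  simp only [PP, Complex.add_re, Complex.add_im, Complex.ofReal_re, Complex.ofReal_im, add_zero,
    tshift_add]
  abel

theorem PP_im (ζ : ℂ) (s : ℝ) : PP (ζ + s * Complex.I) = PP ζ + tshift 1 s := by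
  simp [PP, tshift_add, add_assoc]

theorem PP_good {ζ : ℂ} (h : ‖ζ‖ < 1 / 6) : Good (PP ζ) := by
  intro a
  fin_cases a
  · exact ⟨ζ.re, (Complex.abs_re_le_norm ζ).trans_lt h, by simp [PP, tshift]⟩
  · exact ⟨ζ.im, (Complex.abs_im_le_norm ζ).trans_lt h, by simp [PP, tshift]⟩

theorem HasD.re {F : Type*} [NormedAddCommGroup F] [NormedSpace ℝ F] {f f' : TT → F}
    (h : HasD 0 f f') (ζ : ℂ) : HasDerivAt (fun s : ℝ => f (PP (ζ + s))) (f' (PP ζ)) 0 := by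
  simp only [PP_re]
  exact h (PP ζ)

theorem HasD.im {F : Type*} [NormedAddCommGroup F] [NormedSpace ℝ F] {f f' : TT → F}
    (h : HasD 1 f f') (ζ : ℂ) :
    HasDerivAt (fun s : ℝ => f (PP (ζ + s * Complex.I))) (f' (PP ζ)) 0 := by
  simp only [PP_im]
  exact h (PP ζ)

theorem disc_exists {N : ℕ} {U : Set (EE N)} (hU : IsOpen U) {z0 : EE N} (hz : z0 ∈ U)
    {J : EE N → EE N →L[ℝ] EE N} (hJ : ContDiffOn ℝ 3 J U)
    (hsq : ∀ z ∈ U, ∀ w, J z (J z w) = -w) (v : EE N) (ε : ℝ) (hε : 0 < ε) :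
    ∃ (f : ℂ → EE N) (t : ℝ) (w : EE N), 0 < t ∧ ContDiffOn ℝ 2 f (Metric.ball 0 (1 / 6)) ∧
      Set.MapsTo f (Metric.ball 0 (1 / 6)) U ∧ IsJHolo J (Metric.ball 0 (1 / 6)) f ∧
      ‖f 0 - z0‖ < ε ∧ fderiv ℝ f 0 1 = t • w ∧ ‖w - v‖ < ε := by
  obtain ⟨R, M, hR, hM, H⟩ := disc_torus hU hz hJ (hsq z0 hz) v
  obtain ⟨δ, hδ, hδ1, hδε⟩ : ∃ δ : ℝ, 0 < δ ∧ δ ≤ 1 ∧ N * (M.toReal * δ) < ε := by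
    refine ⟨min 1 (ε / (N * M.toReal + 1)), by positivity, min_le_left _ _, ?_⟩
    have h1 : (0 : ℝ) < N * M.toReal + 1 := by positivity
    have h2 : min 1 (ε / (N * M.toReal + 1)) ≤ ε / (N * M.toReal + 1) := min_le_right _ _
    calc N * (M.toReal * min 1 (ε / (N * M.toReal + 1)))
        = N * M.toReal * min 1 (ε / (N * M.toReal + 1)) := by ring
      _ ≤ N * M.toReal * (ε / (N * M.toReal + 1)) := by gcongr
      _ < (N * M.toReal + 1) * (ε / (N * M.toReal + 1)) := by
          have : 0 < ε / (N * M.toReal + 1) := by positivity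
          linarith
      _ = ε := by field_simp
  have t1 : ∀ᶠ t in 𝓝[>] (0 : ℝ), t * (N * R.toReal) < ε := by
    have : Tendsto (fun t : ℝ => t * (N * R.toReal)) (𝓝 0) (𝓝 (0 * (N * R.toReal))) :=
      Continuous.tendsto (by fun_prop) 0
    exact nhdsWithin_le_nhds (this.eventually_lt_const (by simpa using hε))
  obtain ⟨t, ⟨⟨g, gd, gdd, hV, hmem, heq, hv⟩, ht1⟩, ht⟩ :=
    (((H δ hδ hδ1).and t1).and self_mem_nhdsWithin).exists
  have ht : 0 < t := ht
  have e0 : ∀ ζ, HasDerivAt (fun s : ℝ => z0 + t • g (PP (ζ + s))) (t • gd 0 (PP ζ)) 0 :=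
    fun ζ => (((hV.d1 0).re ζ).const_smul t).const_add z0
  have e1 : ∀ ζ, HasDerivAt (fun s : ℝ => z0 + t • g (PP (ζ + s * Complex.I))) (t • gd 1 (PP ζ)) 0 :=
    fun ζ => (((hV.d1 1).im ζ).const_smul t).const_add z0
  have hfd := pa_partials (F := fun ζ => z0 + t • g (PP ζ)) (F0 := fun ζ => t • gd 0 (PP ζ))
    (F1 := fun ζ => t • gd 1 (PP ζ)) (((hV.c1 0).comp PP_cont).const_smul t)
    (((hV.c1 1).comp PP_cont).const_smul t) e0 e1
  have hPP0 : PP 0 = 0 := by simp [PP, tshift_zero]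
  refine ⟨fun ζ => z0 + t • g (PP ζ), t, gd 0 0, ht, ?_, fun ζ _ => hmem _, ?_, ?_, ?_, ?_⟩
  · refine ContDiff.contDiffOn ?_
    exact pa_contDiff_two (F := fun ζ => z0 + t • g (PP ζ)) (F0 := fun ζ => t • gd 0 (PP ζ))
      (F1 := fun ζ => t • gd 1 (PP ζ))
      (((hV.c2 0 0).comp PP_cont).const_smul t) (((hV.c2 0 1).comp PP_cont).const_smul t)
      (((hV.c2 1 0).comp PP_cont).const_smul t) (((hV.c2 1 1).comp PP_cont).const_smul t) e0 e1
      (fun ζ => ((hV.d2 0 0).re ζ).const_smul t) (fun ζ => ((hV.d2 0 1).im ζ).const_smul t)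
      (fun ζ => ((hV.d2 1 0).re ζ).const_smul t) (fun ζ => ((hV.d2 1 1).im ζ).const_smul t)
  · intro ζ hζ ξ
    have hg := heq (PP ζ) (PP_good (by simpa using hζ))
    rw [(hfd ζ).fderiv]
    have hJJ := hsq _ (hmem (PP ζ))
    have h0 : gd 0 (PP ζ) = -(J (z0 + t • g (PP ζ)) (gd 1 (PP ζ))) := by
      have h := hg
      rw [ContinuousLinearMap.sub_apply, sub_eq_add_neg, add_comm] at h
      exact add_left_cancel h
    simp only [ContinuousLinearMap.add_apply, ContinuousLinearMap.smulRight_apply,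
      Complex.reCLM_apply, Complex.imCLM_apply, map_add, map_smul, Complex.mul_re, Complex.mul_im,
      Complex.I_re, Complex.I_im, h0, map_neg, hJJ]
    simp only [zero_mul, one_mul, zero_sub, zero_add, smul_neg, neg_smul, neg_neg]
    abel
  · simp only [add_sub_cancel_left, norm_smul, Real.norm_eq_abs, abs_of_pos ht]
    exact (mul_le_mul_of_nonneg_left (hV.b0 hR _) ht.le).trans_lt ht1
  · rw [(hfd 0).fderiv, hPP0]
    simp
  · refine hv.trans_lt ?_
    rw [ENNReal.toReal_mul, ENNReal.toReal_ofReal hδ.le]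
    exact hδε

end PartL

theorem stmt_6 {n : ℕ} (hn : 1 ≤ n)
    (D : Set (EuclideanSpace ℝ (Fin (2 * n)))) (hD : IsOpen D)
    (J : EuclideanSpace ℝ (Fin (2 * n)) →
      (EuclideanSpace ℝ (Fin (2 * n)) →L[ℝ] EuclideanSpace ℝ (Fin (2 * n))))
    (hJsmooth : ContDiffOn ℝ (⊤ : ℕ∞) J D)
    (hJsq : ∀ z ∈ D, (J z).comp (J z) =
      - ContinuousLinearMap.id ℝ (EuclideanSpace ℝ (Fin (2 * n))))
    (u : EuclideanSpace ℝ (Fin (2 * n)) → ℝ)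
    (hu : ContDiffOn ℝ 2 u D) :
    (∀ Ω : Set ℂ, IsOpen Ω →
      ∀ f : ℂ → EuclideanSpace ℝ (Fin (2 * n)),
        ContDiffOn ℝ 2 f Ω → Set.MapsTo f Ω D → IsJHolo J Ω f →
        ∀ ζ ∈ Ω, 0 ≤ lap (u ∘ f) ζ) ↔
    (∀ z ∈ D, ∀ v, 0 ≤ acLevi J u z v) := by
  have hJ3 : ContDiffOn ℝ 3 J D := hJsmooth.of_le (WithTop.coe_le_coe.2 (le_top : (3 : ℕ∞) ≤ ⊤))
  have hJ1 : ContDiffOn ℝ 1 J D := hJsmooth.of_le (by exact_mod_cast le_top)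
  have hsq : ∀ z ∈ D, ∀ w, J z (J z w) = -w := by
    intro z hz w
    have := congrArg (fun L => L w) (hJsq z hz)
    simpa using this
  constructor
  · intro H z hz v
    choose f t w ht hf hm hh h0 hfd hw using fun k : ℕ =>
      disc_exists hD hz hJ3 hsq v (1 / ((k : ℝ) + 1)) (by positivity)
    have hmem : (0 : ℂ) ∈ Metric.ball (0 : ℂ) (1 / 6) := Metric.mem_ball_self (by norm_num)
    have hpos : ∀ k, 0 ≤ acLevi J u (f k 0) (w k) := by
      intro k
      have h1 := H _ Metric.isOpen_ball (f k) (hf k) (hm k) (hh k) 0 hmem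
      rw [pa_lap_eq_levi hD hJ1 hu Metric.isOpen_ball (hf k) (hm k) (hh k) hmem, hfd k,
        pa_levi_smul hD hJ1 hu (hm k hmem)] at h1
      exact nonneg_of_mul_nonneg_right h1 (pow_pos (ht k) 2)
    have l1 : Tendsto (fun k => f k 0) atTop (𝓝 z) := by
      rw [tendsto_iff_norm_sub_tendsto_zero]
      exact squeeze_zero (fun _ => norm_nonneg _) (fun k => (h0 k).le)
        tendsto_one_div_add_atTop_nhds_zero_nat
    have l2 : Tendsto w atTop (𝓝 v) := by
      rw [tendsto_iff_norm_sub_tendsto_zero]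
      exact squeeze_zero (fun _ => norm_nonneg _) (fun k => (hw k).le)
        tendsto_one_div_add_atTop_nhds_zero_nat
    exact ge_of_tendsto' (pa_levi_tendsto hD hJ1 hu hz v l1 l2) hpos
  · intro H Ω hΩ f hf hm hh ζ hζ
    rw [pa_lap_eq_levi hD hJ1 hu hΩ hf hm hh hζ]
    exact H _ (hm hζ) _
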